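/- arXiv:1605.09701 — 2 statements merged into one kernel-verified Lean document; each statement's English description precedes it below -/
import Mathlib

section
/- Let P be the R-measure, c = (1/2, √3/6), and let ℓ ≥ 1 be a positive integer, so that n = 3^ℓ + 1. Then for every word τ ∈ {1,2,3}^ℓ and every optimal set of two-means α₂ for P, the set { S_ω(c) : ω ∈ {1,2,3}^ℓ, ω ≠ τ } ∪ S_τ(α₂) is an optimal set of n-means for P, where S_τ(α₂) = {S_τ(a) : a ∈ α₂}. -/
open MeasureTheory ENNReal

noncomputable section

abbrev E2 : Type := EuclideanSpace ℝ (Fin 2)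

/-- The point (a, b) of the Euclidean plane. -/
def pt (a b : ℝ) : E2 := (WithLp.equiv 2 (Fin 2 → ℝ)).symm ![a, b]

/-- S₁(x) = x/3. -/
def S1 : E2 → E2 := fun x => (3 : ℝ)⁻¹ • x

/-- S₂(x) = x/3 + (2/3, 0). -/
def S2 : E2 → E2 := fun x => (3 : ℝ)⁻¹ • x + pt (2/3) 0

/-- S₃(x) = x/3 + (1/3, √3/3). -/
def S3 : E2 → E2 := fun x => (3 : ℝ)⁻¹ • x + pt (1/3) (Real.sqrt 3 / 3)

def Smap : Fin 3 → E2 → E2 := ![S1, S2, S3]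

/-- For a word ω = ω₁⋯ω_k ∈ {1,2,3}^k, the composition S_ω = S_{ω₁} ∘ ⋯ ∘ S_{ω_k}. -/
def Sword {k : ℕ} (ω : Fin k → Fin 3) : E2 → E2 :=
  fun x => (List.ofFn fun i => Smap (ω i)).foldr (fun g y => g y) x

/-- The closed triangle with vertices (0,0), (1,0), (1/2, √3/2). -/
def Tri : Set E2 := convexHull ℝ {pt 0 0, pt 1 0, pt (1/2) (Real.sqrt 3 / 2)}

/-- The distortion error ∫ min_{a ∈ α} ‖x − a‖² dμ of a set α of points. -/
def err (μ : Measure E2) (α : Set E2) : ℝ≥0∞ :=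
  ∫⁻ x, ⨅ a ∈ α, ENNReal.ofReal (‖x - a‖ ^ 2) ∂μ

/-- The n-th quantization error V_n(μ). -/
def quantErr (μ : Measure E2) (n : ℕ) : ℝ≥0∞ :=
  ⨅ (α : Set E2) (_ : α.Finite ∧ α.ncard ≤ n), err μ α

/-- α is an optimal set of n-means for μ. -/
def IsOptimal (μ : Measure E2) (n : ℕ) (α : Set E2) : Prop :=
  α.Finite ∧ α.ncard ≤ n ∧ err μ α = quantErr μ n


/-! ### Part 1: a finite combinatorial check -/

namespace RM

/-- A cluster of lattice points: number of points, coordinate sums, sum of squares. -/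
structure Cl where
  m : ℕ
  a : ℕ
  b : ℕ
  c : ℕ
  q : ℕ

/-- A vertex of a second level triangle in (scaled) barycentric coordinates. -/
structure Vt where
  j : Fin 3
  l : Fin 3
  w0 : ℕ
  w1 : ℕ
  w2 : ℕ
  e0 : ℕ
  e1 : ℕ
  e2 : ℕ

def addV (k : Cl) (v : Vt) : Cl :=
  ⟨k.m + 1, k.a + v.w0, k.b + v.w1, k.c + v.w2, k.q + (v.w0 * v.w0 + v.w1 * v.w1 + v.w2 * v.w2)⟩

def okC (k : Cl) : Bool :=
  (Nat.beq k.m 0 && Nat.beq k.a 0 && Nat.beq k.b 0 && Nat.beq k.c 0)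
    || Nat.beq (2520 / k.m * k.m) 2520

def lowC (k : Cl) : ℕ := 2520 / k.m * (k.a * k.a + k.b * k.b + k.c * k.c)

def rho (r : ℕ) : ℕ := bif Nat.beq r 0 then 0 else 7 + 9 * r

def leaf (thr : ℕ) (k1 k2 k3 : Cl) (r0 r1 r2 : ℕ) : Bool :=
  okC k1 && okC k2 && okC k3 &&
    Nat.ble (2520 * thr + (lowC k1 + lowC k2 + lowC k3))
      (2520 * (k1.q + k2.q + k3.q) + 1260 * (rho r0 + rho r1 + rho r2))

def go (u2 u3 uR : Bool) (thr : ℕ) : List Vt → Cl → Cl → Cl → ℕ → ℕ → ℕ → Bool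
  | [], k1, k2, k3, r0, r1, r2 => leaf thr k1 k2 k3 r0 r1 r2
  | v :: vs, k1, k2, k3, r0, r1, r2 =>
      go u2 u3 uR thr vs (addV k1 v) k2 k3 r0 r1 r2 &&
      (!u2 || go u2 u3 uR thr vs k1 (addV k2 v) k3 r0 r1 r2) &&
      (!u3 || go u2 u3 uR thr vs k1 k2 (addV k3 v) r0 r1 r2) &&
      (!uR || go u2 u3 uR thr vs k1 k2 k3 (r0 + v.e0) (r1 + v.e1) (r2 + v.e2))

def verts : List Vt :=
  [⟨0, 0, 3, 0, 0, 1, 0, 0⟩, ⟨0, 1, 2, 1, 0, 1, 0, 0⟩, ⟨0, 2, 2, 0, 1, 1, 0, 0⟩,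
   ⟨1, 0, 1, 2, 0, 0, 1, 0⟩, ⟨1, 1, 0, 3, 0, 0, 1, 0⟩, ⟨1, 2, 0, 2, 1, 0, 1, 0⟩,
   ⟨2, 0, 1, 0, 2, 0, 0, 1⟩, ⟨2, 1, 0, 1, 2, 0, 0, 1⟩, ⟨2, 2, 0, 0, 3, 0, 0, 1⟩]

def zc : Cl := ⟨0, 0, 0, 0, 0⟩

theorem check1 : go false false true 30 verts zc zc zc 0 0 0 = true := by decide +kernel

theorem check2 : go true false true 18 verts zc zc zc 0 0 0 = true := by decide +kernel

theorem check3 : go true true false 6 verts zc zc zc 0 0 0 = true := by decide +kernel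

def costC (k : Cl) (x : Fin 3 → ℝ) : ℝ :=
  k.q - 2 * (k.a * x 0 + k.b * x 1 + k.c * x 2) + k.m * (x 0 ^ 2 + x 1 ^ 2 + x 2 ^ 2)

def nrmV (v : Vt) (x : Fin 3 → ℝ) : ℝ :=
  (v.w0 - x 0) ^ 2 + (v.w1 - x 1) ^ 2 + (v.w2 - x 2) ^ 2

theorem costC_add (k : Cl) (v : Vt) (x : Fin 3 → ℝ) :
    costC (addV k v) x = costC k x + nrmV v x := by
  simp only [costC, addV, nrmV]; push_cast; ring

theorem costC_low (k : Cl) (x : Fin 3 → ℝ) (h : okC k = true) :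
    2520 * (k.q : ℝ) - lowC k ≤ 2520 * costC k x := by
  obtain ⟨m, a, b, c, q⟩ := k
  simp only [okC, Bool.or_eq_true, Bool.and_eq_true, Nat.beq_eq] at h
  simp only [costC, lowC]
  rcases h with ⟨⟨⟨h1, h2⟩, h3⟩, h4⟩ | h
  · subst h1 h2 h3 h4; simp
  · generalize 2520 / m = t at h
    have h' : (t : ℝ) * m = 2520 := by exact_mod_cast h
    push_cast
    have ht : (0 : ℝ) ≤ t := by positivity
    have hs := mul_nonneg ht (add_nonneg (add_nonneg (sq_nonneg ((a : ℝ) - m * x 0))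
      (sq_nonneg ((b : ℝ) - m * x 1))) (sq_nonneg ((c : ℝ) - m * x 2)))
    have e : (t : ℝ) * (((a : ℝ) - m * x 0) ^ 2 + ((b : ℝ) - m * x 1) ^ 2 + ((c : ℝ) - m * x 2) ^ 2)
        = t * (a * a + b * b + c * c) - 2 * (t * m) * (a * x 0 + b * x 1 + c * x 2)
          + (t * m) * m * (x 0 ^ 2 + x 1 ^ 2 + x 2 ^ 2) := by ring
    rw [e, h'] at hs
    nlinarith

theorem rho_le (s κ : ℝ) (hs : 0 ≤ s) (h1 : 8 ≤ s + κ) (h2 : 9 / 2 ≤ κ) (r : ℕ) :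
    1260 * (rho r : ℝ) ≤ 2520 * (s + κ * r) := by
  unfold rho
  rcases Nat.eq_zero_or_pos r with h | h
  · subst h; simp; linarith
  · have : Nat.beq r 0 = false := by
      cases r with
      | zero => omega
      | succ n => rfl
    rw [this]; simp only [cond_false]; push_cast
    have : (1 : ℝ) ≤ r := by exact_mod_cast h
    nlinarith

theorem go_sound (u2 u3 uR : Bool) (thr : ℕ) (b1 b2 b3 s κ : Fin 3 → ℝ)
    (hs : ∀ j, 0 ≤ s j) (h1 : ∀ j, 8 ≤ s j + κ j) (h2 : ∀ j, 9 / 2 ≤ κ j)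
    (d : Fin 3 → Fin 3 → ℝ) :
    ∀ (vs : List Vt) (k1 k2 k3 : Cl) (r0 r1 r2 : ℕ),
      go u2 u3 uR thr vs k1 k2 k3 r0 r1 r2 = true →
      (∀ v ∈ vs, nrmV v b1 ≤ d v.j v.l ∨ (u2 = true ∧ nrmV v b2 ≤ d v.j v.l) ∨
        (u3 = true ∧ nrmV v b3 ≤ d v.j v.l) ∨
        (uR = true ∧ κ 0 * v.e0 + κ 1 * v.e1 + κ 2 * v.e2 ≤ d v.j v.l)) →
      (thr : ℝ) ≤ costC k1 b1 + costC k2 b2 + costC k3 b3 + (s 0 + κ 0 * r0) + (s 1 + κ 1 * r1)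
        + (s 2 + κ 2 * r2) + (vs.map fun v => d v.j v.l).sum := by
  intro vs
  induction vs with
  | nil =>
    intro k1 k2 k3 r0 r1 r2 h _
    simp only [go, leaf, Bool.and_eq_true] at h
    obtain ⟨⟨⟨o1, o2⟩, o3⟩, h⟩ := h
    have h := Nat.le_of_ble_eq_true h
    have h' : (2520 * thr + (lowC k1 + lowC k2 + lowC k3) : ℝ)
      ≤ 2520 * (k1.q + k2.q + k3.q) + 1260 * (rho r0 + rho r1 + rho r2) := by exact_mod_cast h
    have c1 := costC_low k1 b1 o1
    have c2 := costC_low k2 b2 o2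
    have c3 := costC_low k3 b3 o3
    have q0 := rho_le (s 0) (κ 0) (hs 0) (h1 0) (h2 0) r0
    have q1 := rho_le (s 1) (κ 1) (hs 1) (h1 1) (h2 1) r1
    have q2 := rho_le (s 2) (κ 2) (hs 2) (h1 2) (h2 2) r2
    simp only [List.map_nil, List.sum_nil]
    linarith
  | cons v vs ih =>
    intro k1 k2 k3 r0 r1 r2 h hv
    simp only [go, Bool.and_eq_true, Bool.or_eq_true, Bool.not_eq_true'] at h
    obtain ⟨⟨⟨g1, g2⟩, g3⟩, g4⟩ := h
    have hvs := fun v' (h' : v' ∈ vs) => hv v' (List.mem_cons_of_mem _ h')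
    simp only [List.map_cons, List.sum_cons]
    rcases hv v (List.mem_cons_self) with h | ⟨hu, h⟩ | ⟨hu, h⟩ | ⟨hu, h⟩
    · have := ih _ _ _ _ _ _ g1 hvs
      rw [costC_add] at this; linarith
    · have := ih _ _ _ _ _ _ (g2.resolve_left (by simp [hu])) hvs
      rw [costC_add] at this; linarith
    · have := ih _ _ _ _ _ _ (g3.resolve_left (by simp [hu])) hvs
      rw [costC_add] at this; linarith
    · have := ih _ _ _ _ _ _ (g4.resolve_left (by simp [hu])) hvs
      push_cast at this; linarith

/-- Scaled squared distance between the vertex `(j, l)` and a point in barycentric coordinates. -/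
def nrm (j l : Fin 3) (x : Fin 3 → ℝ) : ℝ :=
  ∑ i, ((if i = l then 1 else 0) + 2 * (if i = j then 1 else 0) - x i) ^ 2

theorem nrm_nonneg (j l : Fin 3) (x : Fin 3 → ℝ) : 0 ≤ nrm j l x :=
  Finset.sum_nonneg fun _ _ => sq_nonneg _

theorem nrmV_eq : ∀ v ∈ verts, ∀ x, nrmV v x = nrm v.j v.l x := by
  intro v hv x
  simp only [verts, List.mem_cons, List.not_mem_nil, or_false] at hv
  rcases hv with h | h | h | h | h | h | h | h | h <;> subst h <;>
    simp [nrmV, nrm, Fin.sum_univ_three] <;> norm_num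

theorem kap_eq (κ : Fin 3 → ℝ) : ∀ v ∈ verts, κ 0 * v.e0 + κ 1 * v.e1 + κ 2 * v.e2 = κ v.j := by
  intro v hv
  simp only [verts, List.mem_cons, List.not_mem_nil, or_false] at hv
  rcases hv with h | h | h | h | h | h | h | h | h <;> subst h <;> simp

theorem verts_sum (d : Fin 3 → Fin 3 → ℝ) :
    (verts.map fun v => d v.j v.l).sum = ∑ j, ∑ l, d j l := by
  simp [verts, Fin.sum_univ_three]; ring

def thrC (h : Bool) (e : Prop) [Decidable e] : ℝ := if h then (if e then 2 else 9 / 2) else 8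

theorem check_apply (u2 u3 uR : Bool) (thr : ℕ) (b1 b2 b3 : Fin 3 → ℝ) (h : Fin 3 → Bool)
    (d : Fin 3 → Fin 3 → ℝ) (hgo : go u2 u3 uR thr verts zc zc zc 0 0 0 = true)
    (hd : ∀ j l, nrm j l b1 ≤ d j l ∨ (u2 = true ∧ nrm j l b2 ≤ d j l) ∨
        (u3 = true ∧ nrm j l b3 ≤ d j l) ∨ (uR = true ∧ thrC (h j) (l = j) ≤ d j l)) :
    (thr : ℝ) ≤ ∑ j, ∑ l, d j l + 6 * ∑ j, (if h j then (1 : ℝ) else 0) := by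
  have key := go_sound u2 u3 uR thr b1 b2 b3 (fun j => if h j then 7 / 2 else 0)
    (fun j => if h j then 9 / 2 else 8)
    (fun j => by by_cases hj : h j = true <;> simp [hj]; norm_num)
    (fun j => by by_cases hj : h j = true <;> simp [hj]; norm_num)
    (fun j => by by_cases hj : h j = true <;> simp [hj]; norm_num)
    (fun j l => d j l + if h j ∧ l = j then 5 / 2 else 0) verts zc zc zc 0 0 0 hgo (by
      intro v hv
      rw [kap_eq (fun j => if h j then 9 / 2 else 8) v hv, nrmV_eq v hv, nrmV_eq v hv,
        nrmV_eq v hv]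
      have h0 : (0 : ℝ) ≤ if h v.j ∧ v.l = v.j then 5 / 2 else 0 := by split_ifs <;> norm_num
      rcases hd v.j v.l with h1 | ⟨hu, h1⟩ | ⟨hu, h1⟩ | ⟨hu, h1⟩
      · left; linarith
      · right; left; exact ⟨hu, by linarith⟩
      · right; right; left; exact ⟨hu, by linarith⟩
      · right; right; right
        refine ⟨hu, ?_⟩
        unfold thrC at h1
        by_cases hj : h v.j = true <;> by_cases hl : v.l = v.j <;> simp [hj, hl] at h1 ⊢ <;>
          linarith)
  rw [verts_sum (fun j l => d j l + if h j ∧ l = j then 5 / 2 else 0)] at key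
  simp only [costC, zc, Nat.cast_zero] at key
  refine key.trans (le_of_eq ?_)
  simp only [Fin.sum_univ_three]
  by_cases a0 : h 0 = true <;> by_cases a1 : h 1 = true <;> by_cases a2 : h 2 = true <;>
    simp [a0, a1, a2] <;> ring

theorem local_bound {ι : Type*} (B : Finset ι) (f : ι → Fin 3 → ℝ) (h : Fin 3 → Bool)
    (d : Fin 3 → Fin 3 → ℝ)
    (hd : ∀ j l, (∃ b ∈ B, nrm j l (f b) ≤ d j l) ∨ thrC (h j) (l = j) ≤ d j l) :
    42 ≤ ∑ j, ∑ l, d j l + 12 * (B.card : ℝ) + 6 * ∑ j, (if h j then (1 : ℝ) else 0) := by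
  have hthr : ∀ j l : Fin 3, 2 ≤ thrC (h j) (l = j) := by
    intro j l; unfold thrC; split_ifs <;> norm_num
  have hd0 : ∀ j l, 0 ≤ d j l := by
    intro j l
    rcases hd j l with ⟨b, _, hb⟩ | hb
    · exact (nrm_nonneg _ _ _).trans hb
    · linarith [hthr j l]
  have hs0 : 0 ≤ ∑ j, ∑ l, d j l := Finset.sum_nonneg fun j _ => Finset.sum_nonneg fun l _ => hd0 j l
  have hf0 : 0 ≤ ∑ j, (if h j then (1 : ℝ) else 0) :=
    Finset.sum_nonneg fun j _ => by split_ifs <;> norm_num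
  rcases Nat.lt_or_ge B.card 4 with hc | hc
  swap
  · have : (4 : ℝ) ≤ B.card := by exact_mod_cast hc
    linarith
  interval_cases hcard : B.card
  · have hB : B = ∅ := Finset.card_eq_zero.mp hcard
    subst hB
    have hd' : ∀ j l, thrC (h j) (l = j) ≤ d j l := by
      intro j l; rcases hd j l with ⟨b, hb, _⟩ | hb
      · simp at hb
      · exact hb
    have : ∀ j, 17 ≤ ∑ l, d j l + 6 * (if h j then (1 : ℝ) else 0) := by
      intro j
      have h0 := hd' j 0
      have h1 := hd' j 1
      have h2 := hd' j 2
      rw [Fin.sum_univ_three]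
      unfold thrC at h0 h1 h2
      by_cases hj : h j = true
      · simp only [hj, if_true] at h0 h1 h2 ⊢
        fin_cases j <;> simp at h0 h1 h2 ⊢ <;> linarith
      · simp only [hj] at h0 h1 h2 ⊢
        simp at h0 h1 h2 ⊢; linarith
    have := Finset.sum_le_sum fun j (_ : j ∈ Finset.univ) => this j
    rw [Finset.sum_add_distrib, ← Finset.mul_sum] at this
    simp at this ⊢; linarith
  · obtain ⟨b, rfl⟩ := Finset.card_eq_one.mp hcard
    have := check_apply _ _ _ _ (f b) (f b) (f b) h d check1 (by
      intro j l; rcases hd j l with ⟨b', hb, hb'⟩ | hb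
      · rw [Finset.mem_singleton] at hb; subst hb; exact Or.inl hb'
      · simp [hb])
    push_cast at this ⊢; linarith
  · classical
    obtain ⟨b, c, _, rfl⟩ := Finset.card_eq_two.mp hcard
    have := check_apply _ _ _ _ (f b) (f c) (f b) h d check2 (by
      intro j l; rcases hd j l with ⟨b', hb, hb'⟩ | hb
      · rw [Finset.mem_insert, Finset.mem_singleton] at hb
        rcases hb with hb | hb
        · subst hb; exact Or.inl hb'
        · subst hb; exact Or.inr (Or.inl ⟨rfl, hb'⟩)
      · simp [hb])
    push_cast at this ⊢; linarith
  · classical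
    by_cases hall : ∀ j l, ∃ b ∈ B, nrm j l (f b) ≤ d j l
    · obtain ⟨b, c, e, _, _, _, rfl⟩ := Finset.card_eq_three.mp hcard
      have := check_apply _ _ _ _ (f b) (f c) (f e) h d check3 (by
        intro j l; obtain ⟨b', hb, hb'⟩ := hall j l
        rw [Finset.mem_insert, Finset.mem_insert, Finset.mem_singleton] at hb
        rcases hb with hb | hb | hb
        · subst hb; exact Or.inl hb'
        · subst hb; exact Or.inr (Or.inl ⟨rfl, hb'⟩)
        · subst hb; exact Or.inr (Or.inr (Or.inl ⟨rfl, hb'⟩)))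
      push_cast at this ⊢; linarith
    · push Not at hall
      obtain ⟨j, l, hjl⟩ := hall
      have hdj : thrC (h j) (l = j) ≤ d j l := by
        rcases hd j l with ⟨b, hb, hb'⟩ | hb
        · exact absurd hb' (not_le.mpr (hjl b hb))
        · exact hb
      by_cases hj : h j = true
      · have : (1 : ℝ) ≤ ∑ j, (if h j then (1 : ℝ) else 0) := by
          have := Finset.single_le_sum (f := fun j => if h j then (1 : ℝ) else 0)
            (fun j _ => by split_ifs <;> norm_num) (Finset.mem_univ j)
          simpa [hj] using this
        push_cast; linarith
      · have e1 := Finset.single_le_sum (f := fun l => d j l) (fun l _ => hd0 j l)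
          (Finset.mem_univ l)
        have e2 := Finset.single_le_sum (f := fun j => ∑ l, d j l)
          (fun j _ => Finset.sum_nonneg fun l _ => hd0 j l) (Finset.mem_univ j)
        simp only [thrC, hj] at hdj
        simp at hdj e1 e2
        push_cast; linarith

end RM

/-! ### Part 2: barycentric coordinates -/

namespace RM

/-- Barycentric coordinates with respect to the triangle. -/
def bt (i : Fin 3) (x : E2) : ℝ :=
  ![1 - x 0 - x 1 / Real.sqrt 3, x 0 - x 1 / Real.sqrt 3, 2 * x 1 / Real.sqrt 3] i

def ve : Fin 3 → E2 := ![pt 0 0, pt 1 0, pt (1/2) (Real.sqrt 3 / 2)]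

def cc : E2 := pt (1/2) (Real.sqrt 3 / 6)

def Sinv (j : Fin 3) (a : E2) : E2 := (3 : ℝ) • a - (2 : ℝ) • ve j

theorem pt_zero (a b : ℝ) : (pt a b) 0 = a := by simp [pt]

theorem pt_one (a b : ℝ) : (pt a b) 1 = b := by simp [pt]

theorem s3 : Real.sqrt 3 ≠ 0 := by positivity

theorem s3sq : Real.sqrt 3 ^ 2 = 3 := Real.sq_sqrt (by norm_num)

theorem norm_sq_bt (x y : E2) : ‖x - y‖ ^ 2 = (1 / 2) * ∑ i, (bt i x - bt i y) ^ 2 := by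
  rw [EuclideanSpace.norm_sq_eq, Fin.sum_univ_two, Fin.sum_univ_three]
  simp only [bt, PiLp.sub_apply, Real.norm_eq_abs, sq_abs, Matrix.cons_val_zero,
    Matrix.cons_val_one, Matrix.cons_val]
  have h := s3
  field_simp
  ring_nf
  simp only [s3sq]
  ring

theorem bt_sum (x : E2) : bt 0 x + bt 1 x + bt 2 x = 1 := by
  simp only [bt, Matrix.cons_val_zero, Matrix.cons_val_one, Matrix.cons_val]
  ring

theorem bt_continuous (i : Fin 3) : Continuous (bt i) := by
  have h0 : bt 0 = fun x : E2 => 1 - x 0 - x 1 / Real.sqrt 3 := rfl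
  have h1 : bt 1 = fun x : E2 => x 0 - x 1 / Real.sqrt 3 := rfl
  have h2 : bt 2 = fun x : E2 => 2 * x 1 / Real.sqrt 3 := rfl
  fin_cases i
  · change Continuous (bt 0); rw [h0]; fun_prop
  · change Continuous (bt 1); rw [h1]; fun_prop
  · change Continuous (bt 2); rw [h2]; fun_prop

theorem bt_ve (i j : Fin 3) : bt i (ve j) = if i = j then 1 else 0 := by
  have h := s3
  fin_cases i <;> fin_cases j <;> simp [bt, ve, pt_zero, pt_one] <;> field_simp <;> norm_num

theorem bt_cc (i : Fin 3) : bt i cc = 1 / 3 := by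
  have h := s3
  fin_cases i <;> simp [bt, cc, pt_zero, pt_one] <;> field_simp <;> norm_num

theorem Smap_eq (j : Fin 3) (x : E2) : Smap j x = (3 : ℝ)⁻¹ • x + (2 / 3 : ℝ) • ve j := by
  fin_cases j
  · ext i; fin_cases i <;> simp [Smap, S1, ve, pt_zero, pt_one]
  · ext i; fin_cases i <;> simp [Smap, S2, ve, pt_zero, pt_one]
  · ext i; fin_cases i <;> simp [Smap, S3, ve, pt_zero, pt_one] <;> ring

theorem bt_Smap (i j : Fin 3) (x : E2) :
    bt i (Smap j x) = bt i x / 3 + 2 / 3 * (if i = j then 1 else 0) := by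
  rw [← bt_ve i j, Smap_eq]
  fin_cases i <;> simp [bt] <;> ring

theorem bt_Sinv (i j : Fin 3) (x : E2) :
    bt i (Sinv j x) = 3 * bt i x - 2 * (if i = j then 1 else 0) := by
  rw [← bt_ve i j, Sinv]
  fin_cases i <;> simp [bt] <;> ring

theorem Smap_Sinv (j : Fin 3) (x : E2) : Smap j (Sinv j x) = x := by
  rw [Smap_eq, Sinv]
  module

theorem dist_Smap (j : Fin 3) (x y : E2) : dist (Smap j x) (Smap j y) = dist x y / 3 := by
  rw [dist_eq_norm, dist_eq_norm, Smap_eq, Smap_eq, add_sub_add_right_eq_sub, ← smul_sub, norm_smul]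
  simp; ring

theorem dist_Sinv (j : Fin 3) (x a : E2) : dist (Smap j x) a = dist x (Sinv j a) / 3 := by
  conv_lhs => rw [← Smap_Sinv j a]
  exact dist_Smap _ _ _

theorem Sinv_inj (j : Fin 3) : Function.Injective (Sinv j) := by
  intro a b h
  rw [← Smap_Sinv j a, h, Smap_Sinv]

theorem Smap_continuous (j : Fin 3) : Continuous (Smap j) := by
  have : Smap j = fun x => (3 : ℝ)⁻¹ • x + (2 / 3 : ℝ) • ve j := funext (Smap_eq j)
  rw [this]; fun_prop

/-- The triangle, in barycentric coordinates. -/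
def TT : Set E2 := {x | ∀ i, 0 ≤ bt i x}

theorem TT_Smap (j : Fin 3) {x : E2} (h : x ∈ TT) : Smap j x ∈ TT := by
  intro i
  rw [bt_Smap]
  have := h i
  split_ifs <;> linarith

theorem bt_le_one {x : E2} (h : x ∈ TT) (i : Fin 3) : bt i x ≤ 1 := by
  have := bt_sum x
  have h0 := h 0
  have h1 := h 1
  have h2 := h 2
  fin_cases i <;> simp <;> linarith

theorem TT_dist {x y : E2} (hx : x ∈ TT) (hy : y ∈ TT) : dist x y ≤ 1 := by
  rw [dist_eq_norm]
  have h := norm_sq_bt x y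
  rw [Fin.sum_univ_three] at h
  have e1 := bt_sum x
  have e2 := bt_sum y
  have x0 := hx 0
  have x1 := hx 1
  have x2 := hx 2
  have y0 := hy 0
  have y1 := hy 1
  have y2 := hy 2
  have : ‖x - y‖ ^ 2 ≤ 1 := by
    rw [h]
    have a2 : bt 2 x = 1 - bt 0 x - bt 1 x := by linarith
    have b2 : bt 2 y = 1 - bt 0 y - bt 1 y := by linarith
    nlinarith [mul_nonneg x0 y0, mul_nonneg x1 y1, mul_nonneg x2 y2, mul_nonneg x0 x1,
      mul_nonneg x0 x2, mul_nonneg x1 x2, mul_nonneg y0 y1, mul_nonneg y0 y2, mul_nonneg y1 y2]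
  nlinarith [norm_nonneg (x - y)]

theorem TT_closed : IsClosed TT := by
  have : TT = ⋂ i, {x | 0 ≤ bt i x} := by ext x; simp [TT]
  rw [this]
  exact isClosed_iInter fun i => isClosed_le continuous_const (bt_continuous i)

theorem cc_mem : cc ∈ TT := fun i => by rw [bt_cc]; norm_num

theorem ve_mem (j : Fin 3) : ve j ∈ TT := fun i => by rw [bt_ve]; split_ifs <;> norm_num

theorem TT_compact : IsCompact TT := by
  refine (isCompact_closedBall cc 1).of_isClosed_subset TT_closed fun x hx => ?_
  rw [Metric.mem_closedBall]; exact TT_dist hx cc_mem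

end RM

/-! ### Part 3: the invariant measure -/

namespace RM

/-- The self-similarity relation. -/
def Inv (P : Measure E2) : Prop := P = (3 : ℝ≥0∞)⁻¹ • (P.map S1 + P.map S2 + P.map S3)

variable {P : Measure E2}

theorem Smap_zero : Smap 0 = S1 := rfl
theorem Smap_one : Smap 1 = S2 := rfl
theorem Smap_two : Smap 2 = S3 := rfl

theorem inv_lint (hP : Inv P) {f : E2 → ℝ≥0∞} (hf : Measurable f) :
    ∫⁻ x, f x ∂P = 3⁻¹ * ∑ j, ∫⁻ x, f (Smap j x) ∂P := by
  have h0 := (Smap_continuous 0).measurable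
  have h1 := (Smap_continuous 1).measurable
  have h2 := (Smap_continuous 2).measurable
  rw [Smap_zero] at h0
  rw [Smap_one] at h1
  rw [Smap_two] at h2
  conv_lhs => rw [hP]
  rw [lintegral_smul_measure, lintegral_add_measure, lintegral_add_measure,
    lintegral_map hf h0, lintegral_map hf h1, lintegral_map hf h2, Fin.sum_univ_three]
  rfl

theorem inv_apply (hP : Inv P) {A : Set E2} (hA : MeasurableSet A) :
    P A = 3⁻¹ * ∑ j, P (Smap j ⁻¹' A) := by
  have h := inv_lint hP (f := A.indicator 1) (measurable_one.indicator hA)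
  rw [lintegral_indicator_one hA] at h
  rw [h]
  congr 1
  refine Finset.sum_congr rfl fun j _ => ?_
  rw [← lintegral_indicator_one ((Smap_continuous j).measurable hA)]
  rfl

theorem inv_le (hP : Inv P) {A B : Set E2} (hA : MeasurableSet A)
    (h : ∀ j, Smap j ⁻¹' A ⊆ B) : P A ≤ P B := by
  rw [inv_apply hP hA, Fin.sum_univ_three]
  calc (3 : ℝ≥0∞)⁻¹ * (P (Smap 0 ⁻¹' A) + P (Smap 1 ⁻¹' A) + P (Smap 2 ⁻¹' A))
      ≤ 3⁻¹ * (P B + P B + P B) := by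
        gcongr
        exacts [h 0, h 1, h 2]
    _ = 3⁻¹ * (3 * P B) := by congr 1; ring
    _ = P B := by
        rw [← mul_assoc, ENNReal.inv_mul_cancel (by norm_num) (by norm_num), one_mul]

theorem tri_ae [IsProbabilityMeasure P] (hP : Inv P) : ∀ᵐ x ∂P, x ∈ TT := by
  change ∀ᵐ x ∂P, ∀ i, 0 ≤ bt i x
  rw [ae_all_iff]
  intro i
  let A : ℝ → Set E2 := fun r => {x | bt i x < -r}
  have hAm : ∀ r, MeasurableSet (A r) := fun r =>
    measurableSet_lt (bt_continuous i).measurable measurable_const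
  have hstep : ∀ r, P (A r) ≤ P (A (3 * r)) := by
    intro r
    refine inv_le hP (hAm r) fun j x hx => ?_
    simp only [A, Set.mem_preimage, Set.mem_ofPred_eq, bt_Smap] at hx ⊢
    split_ifs at hx <;> linarith
  have hiter : ∀ r (n : ℕ), P (A r) ≤ P (A (3 ^ n * r)) := by
    intro r n
    induction n with
    | zero => simp
    | succ n ih =>
      refine ih.trans ((hstep _).trans (le_of_eq ?_))
      congr 2; ring
  have hlim : ∀ r, 0 < r → P (A r) = 0 := by
    intro r hr
    have ht : Filter.Tendsto (fun n : ℕ => P (A (3 ^ n * r))) Filter.atTop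
        (nhds (P (⋂ n : ℕ, A (3 ^ n * r)))) := by
      refine tendsto_measure_iInter_atTop (fun n => (hAm _).nullMeasurableSet) ?_
        ⟨0, measure_ne_top _ _⟩
      intro m n hmn x hx
      simp only [A, Set.mem_ofPred_eq] at hx ⊢
      have : (3 : ℝ) ^ m ≤ 3 ^ n := pow_le_pow_right₀ (by norm_num) hmn
      nlinarith
    have he : (⋂ n : ℕ, A (3 ^ n * r)) = ∅ := by
      ext x
      simp only [Set.mem_iInter, Set.mem_empty_iff_false, iff_false, not_forall, A,
        Set.mem_ofPred_eq, not_lt]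
      obtain ⟨n, hn⟩ := pow_unbounded_of_one_lt (-(bt i x) / r) (by norm_num : (1 : ℝ) < 3)
      refine ⟨n, ?_⟩
      rw [div_lt_iff₀ hr] at hn
      linarith
    rw [he, measure_empty] at ht
    exact le_antisymm (ge_of_tendsto' ht fun n => hiter r n) bot_le
  rw [ae_iff]
  have : {x | ¬ 0 ≤ bt i x} = ⋃ n : ℕ, A (1 / ((n : ℝ) + 1)) := by
    ext x
    simp only [Set.mem_ofPred_eq, not_le, Set.mem_iUnion, A]
    constructor
    · intro h
      obtain ⟨n, hn⟩ := exists_nat_one_div_lt (neg_pos.mpr h)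
      exact ⟨n, by linarith⟩
    · rintro ⟨n, hn⟩
      have : (0 : ℝ) < 1 / ((n : ℝ) + 1) := by positivity
      linarith
  rw [this, measure_iUnion_null_iff]
  intro n
  exact hlim _ (by positivity)

theorem cont_int [IsProbabilityMeasure P] (hP : Inv P) {f : E2 → ℝ} (hf : Continuous f) :
    Integrable f P := by
  obtain ⟨C, hC⟩ := TT_compact.exists_bound_of_continuousOn hf.continuousOn
  refine Integrable.of_bound hf.aestronglyMeasurable C ?_
  filter_upwards [tri_ae hP] with x hx using hC x hx

theorem inv_int [IsProbabilityMeasure P] (hP : Inv P) {f : E2 → ℝ} (hf : Continuous f) :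
    ∫ x, f x ∂P = (1 / 3) * ∑ j, ∫ x, f (Smap j x) ∂P := by
  have hi : ∀ j, Integrable f (P.map (Smap j)) := fun j => by
    rw [integrable_map_measure hf.aestronglyMeasurable (Smap_continuous j).aemeasurable]
    exact cont_int hP (hf.comp (Smap_continuous j))
  have hm : ∀ j, ∫ x, f x ∂(P.map (Smap j)) = ∫ x, f (Smap j x) ∂P := fun j =>
    integral_map (Smap_continuous j).aemeasurable hf.aestronglyMeasurable
  conv_lhs => rw [hP]
  rw [← Smap_zero, ← Smap_one, ← Smap_two, integral_smul_measure,
    integral_add_measure ((hi 0).add_measure (hi 1)) (hi 2),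
    integral_add_measure (hi 0) (hi 1), hm, hm, hm, Fin.sum_univ_three]
  simp

theorem mean_bt [IsProbabilityMeasure P] (hP : Inv P) (i : Fin 3) : ∫ x, bt i x ∂P = 1 / 3 := by
  have h := inv_int hP (bt_continuous i)
  have hi := cont_int hP (bt_continuous i)
  simp only [bt_Smap] at h
  have e : ∀ j : Fin 3, ∫ x, (bt i x / 3 + 2 / 3 * (if i = j then (1 : ℝ) else 0)) ∂P
      = (∫ x, bt i x ∂P) / 3 + 2 / 3 * (if i = j then (1 : ℝ) else 0) := by
    intro j
    rw [integral_add (hi.div_const 3) (integrable_const _), integral_div]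
    simp
  simp only [e] at h
  rw [Finset.sum_add_distrib, ← Finset.mul_sum] at h
  simp at h
  linarith

theorem btsq_continuous (i : Fin 3) : Continuous fun x => bt i x ^ 2 := (bt_continuous i).pow 2

theorem int_quad [IsProbabilityMeasure P] (hP : Inv P) (i : Fin 3) (a b c : ℝ) :
    ∫ x, (a * bt i x ^ 2 + (b * bt i x + c)) ∂P
      = a * ∫ x, bt i x ^ 2 ∂P + (b * (1 / 3) + c) := by
  have hi := cont_int hP (bt_continuous i)
  have hi2 := cont_int hP (btsq_continuous i)
  have h3 : Integrable (fun x => b * bt i x + c) P := (hi.const_mul b).add (integrable_const c)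
  rw [integral_add (hi2.const_mul a) h3, integral_add (hi.const_mul b) (integrable_const c),
    integral_const_mul, integral_const_mul, mean_bt hP]
  simp

theorem sq_bt [IsProbabilityMeasure P] (hP : Inv P) (i : Fin 3) :
    ∫ x, bt i x ^ 2 ∂P = 2 / 9 := by
  have h := inv_int hP (btsq_continuous i)
  simp only [bt_Smap] at h
  have e : ∀ j : Fin 3, ∫ x, (bt i x / 3 + 2 / 3 * (if i = j then (1 : ℝ) else 0)) ^ 2 ∂P
      = (∫ x, bt i x ^ 2 ∂P) / 9 + 16 / 27 * (if i = j then (1 : ℝ) else 0) := by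
    intro j
    have : ∀ x, (bt i x / 3 + 2 / 3 * (if i = j then (1 : ℝ) else 0)) ^ 2
      = (1 / 9) * bt i x ^ 2 + ((4 / 9 * (if i = j then (1 : ℝ) else 0)) * bt i x
        + 4 / 9 * (if i = j then (1 : ℝ) else 0)) := by
      intro x; split_ifs <;> ring
    simp only [this]
    rw [int_quad hP]
    ring
  simp only [e] at h
  rw [Finset.sum_add_distrib, ← Finset.mul_sum] at h
  simp at h
  linarith

theorem moment [IsProbabilityMeasure P] (hP : Inv P) (a : E2) :
    ∫ x, ‖x - a‖ ^ 2 ∂P = 1 / 6 + ‖cc - a‖ ^ 2 := by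
  have e : ∀ i, ∫ x, (bt i x - bt i a) ^ 2 ∂P = 2 / 9 - 2 / 3 * bt i a + bt i a ^ 2 := by
    intro i
    have : ∀ x, (bt i x - bt i a) ^ 2 = 1 * bt i x ^ 2 + ((- 2 * bt i a) * bt i x + bt i a ^ 2) := by
      intro x; ring
    simp only [this]
    rw [int_quad hP, sq_bt hP]
    ring
  simp only [norm_sq_bt]
  rw [integral_const_mul, integral_finsetSum]
  · simp only [e, bt_cc, Fin.sum_univ_three]
    have := bt_sum a
    have h2 : bt 2 a = 1 - bt 0 a - bt 1 a := by linarith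
    rw [h2]; ring
  · intro i _
    exact cont_int hP (((bt_continuous i).sub continuous_const).pow 2)

/-! ### Part 4: real-valued distortion -/

/-- Distortion error as a real number. -/
def Er (P : Measure E2) (α : Set E2) : ℝ := ∫ x, Metric.infDist x α ^ 2 ∂P

theorem inf_cont (α : Set E2) : Continuous fun x : E2 => Metric.infDist x α ^ 2 :=
  (Metric.continuous_infDist_pt α).pow 2

theorem near {α : Set E2} (hf : α.Finite) (hn : α.Nonempty) (x : E2) :
    ∃ a ∈ α, Metric.infDist x α = dist x a :=
  hf.isCompact.exists_infDist_eq_dist hn x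

theorem err_eq [IsProbabilityMeasure P] (hP : Inv P) {α : Set E2} (hf : α.Finite)
    (hn : α.Nonempty) : err P α = ENNReal.ofReal (Er P α) := by
  unfold err Er
  rw [ofReal_integral_eq_lintegral_ofReal (cont_int hP (inf_cont α))
    (Filter.Eventually.of_forall fun x => sq_nonneg _)]
  refine lintegral_congr fun x => ?_
  obtain ⟨a, ha, hx⟩ := near hf hn x
  refine le_antisymm ?_ ?_
  · refine (iInf₂_le a ha).trans ?_
    rw [hx, dist_eq_norm]
  · refine le_iInf₂ fun b hb => ENNReal.ofReal_le_ofReal ?_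
    rw [← dist_eq_norm]
    exact pow_le_pow_left₀ Metric.infDist_nonneg (Metric.infDist_le_dist_of_mem hb) 2

theorem infDist_Sinv {α : Set E2} (hf : α.Finite) (hn : α.Nonempty) (j : Fin 3) (x : E2) :
    Metric.infDist (Smap j x) α = Metric.infDist x (Sinv j '' α) / 3 := by
  refine le_antisymm ?_ ?_
  · obtain ⟨b, hb, e⟩ := near (hf.image (Sinv j)) (hn.image _) x
    obtain ⟨a, ha, rfl⟩ := hb
    rw [e, ← dist_Sinv]
    exact Metric.infDist_le_dist_of_mem ha
  · obtain ⟨a, ha, e⟩ := near hf hn (Smap j x)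
    rw [e, dist_Sinv]
    gcongr
    exact Metric.infDist_le_dist_of_mem ⟨a, ha, rfl⟩

theorem Er_split [IsProbabilityMeasure P] (hP : Inv P) {α : Set E2} (hf : α.Finite)
    (hn : α.Nonempty) : Er P α = (1 / 27) * ∑ j, Er P (Sinv j '' α) := by
  unfold Er
  rw [inv_int hP (inf_cont α)]
  simp only [infDist_Sinv hf hn, div_pow]
  simp only [integral_div]
  rw [← Finset.sum_div]; ring

theorem vert0 [IsProbabilityMeasure P] (hP : Inv P) {α : Set E2} (hf : α.Finite)
    (hn : α.Nonempty) : (1 / 3) * ∑ l, Metric.infDist (ve l) α ^ 2 - 1 / 6 ≤ Er P α := by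
  have hpt : ∀ x ∈ TT, ∑ l, bt l x * Metric.infDist (ve l) α ^ 2 - (1 / 3 - ‖x - cc‖ ^ 2)
      ≤ Metric.infDist x α ^ 2 := by
    intro x hx
    obtain ⟨a, ha, e⟩ := near hf hn x
    have h1 : ∀ l, bt l x * Metric.infDist (ve l) α ^ 2 ≤ bt l x * ‖ve l - a‖ ^ 2 := by
      intro l
      rw [← dist_eq_norm]
      exact mul_le_mul_of_nonneg_left (pow_le_pow_left₀ Metric.infDist_nonneg
        (Metric.infDist_le_dist_of_mem ha) 2) (hx l)
    have h2 := Finset.sum_le_sum fun l (_ : l ∈ Finset.univ) => h1 l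
    rw [e, dist_eq_norm]
    refine (sub_le_sub_right h2 _).trans (le_of_eq ?_)
    simp only [norm_sq_bt, Fin.sum_univ_three, bt_ve, bt_cc]
    simp
    have hx2 : bt 2 x = 1 - bt 0 x - bt 1 x := by linarith [bt_sum x]
    have ha2 : bt 2 a = 1 - bt 0 a - bt 1 a := by linarith [bt_sum a]
    rw [hx2, ha2]; ring
  have hcb : ∀ l ∈ Finset.univ, Integrable (fun x => bt l x * Metric.infDist (ve l) α ^ 2) P :=
    fun l _ => cont_int hP ((bt_continuous l).mul continuous_const)
  have hq : Continuous fun x : E2 => ‖x - cc‖ ^ 2 := by fun_prop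
  have hq2 : Integrable (fun x : E2 => 1 / 3 - ‖x - cc‖ ^ 2) P :=
    cont_int hP (continuous_const.sub hq)
  have hle : ∫ x, (∑ l, bt l x * Metric.infDist (ve l) α ^ 2 - (1 / 3 - ‖x - cc‖ ^ 2)) ∂P
      ≤ Er P α := by
    refine integral_mono_ae ((integrable_finsetSum _ hcb).sub hq2)
      (cont_int hP (inf_cont α)) ?_
    filter_upwards [tri_ae hP] with x hx using hpt x hx
  rw [integral_sub (integrable_finsetSum _ hcb) hq2, integral_finsetSum _ hcb,
    integral_sub (integrable_const _) (cont_int hP hq), moment hP] at hle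
  simp only [integral_mul_const, mean_bt hP] at hle
  rw [← Finset.mul_sum] at hle
  simp at hle
  linarith

theorem vert1 [IsProbabilityMeasure P] (hP : Inv P) {α : Set E2} (hf : α.Finite)
    (hn : α.Nonempty) :
    (1 / 9) * ∑ j, ∑ l, Metric.infDist (Smap j (ve l)) α ^ 2 - 1 / 54 ≤ Er P α := by
  rw [Er_split hP hf hn]
  have h := fun j => vert0 hP (hf.image (Sinv j)) (hn.image (Sinv j))
  have h2 := Finset.sum_le_sum fun j (_ : j ∈ Finset.univ) => h j
  simp only [infDist_Sinv hf hn, div_pow, Fin.sum_univ_three] at h2 ⊢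
  linarith

end RM

/-! ### Part 5: the first-level lower bound -/

namespace RM

variable {P : Measure E2}

theorem bt_half {i j : Fin 3} (hij : i ≠ j) (p q : E2) :
    (bt j p - bt i p) - (bt j q - bt i q) ≤ 2 * dist p q := by
  have h := norm_sq_bt p q
  rw [← dist_eq_norm, Fin.sum_univ_three] at h
  have h0 : (0 : ℝ) ≤ dist p q := dist_nonneg
  refine le_of_sq_le_sq ?_ (by positivity) |>.trans le_rfl
  rw [mul_pow, h]
  fin_cases i <;> fin_cases j <;> simp at hij ⊢ <;>
  nlinarith [sq_nonneg (bt 0 p - bt 0 q + (bt 1 p - bt 1 q)),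
    sq_nonneg (bt 0 p - bt 0 q + (bt 2 p - bt 2 q)),
    sq_nonneg (bt 1 p - bt 1 q + (bt 2 p - bt 2 q)),
    sq_nonneg (bt 0 p - bt 0 q), sq_nonneg (bt 1 p - bt 1 q), sq_nonneg (bt 2 p - bt 2 q)]

theorem bt_one (i : Fin 3) (p q : E2) :
    3 / 4 * (bt i p - bt i q) ^ 2 ≤ dist p q ^ 2 := by
  have h := norm_sq_bt p q
  rw [← dist_eq_norm, Fin.sum_univ_three] at h
  have e1 := bt_sum p
  have e2 := bt_sum q
  have a2 : bt 2 p = 1 - bt 0 p - bt 1 p := by linarith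
  have b2 : bt 2 q = 1 - bt 0 q - bt 1 q := by linarith
  rw [h]
  rw [a2, b2]
  fin_cases i <;> simp
  · nlinarith [sq_nonneg ((bt 0 p - bt 0 q) + 2 * (bt 1 p - bt 1 q))]
  · nlinarith [sq_nonneg (2 * (bt 0 p - bt 0 q) + (bt 1 p - bt 1 q))]
  · rw [a2, b2]; nlinarith [sq_nonneg ((bt 0 p - bt 0 q) - (bt 1 p - bt 1 q))]

/-- `a` is close to the first-level cell `i`. -/
def Nn (i : Fin 3) (a : E2) : Prop := ∃ x ∈ TT, dist (Smap i x) a < 2 / 9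

theorem Nn_third {i : Fin 3} {a : E2} (h : Nn i a) : 1 / 3 < bt i a := by
  obtain ⟨x, hx, hd⟩ := h
  have h1 := bt_one i (Smap i x) a
  have h2 : 2 / 3 ≤ bt i (Smap i x) := by
    rw [bt_Smap]; simp; linarith [hx i]
  have h3 : dist (Smap i x) a ^ 2 < (2 / 9) ^ 2 :=
    pow_lt_pow_left₀ hd dist_nonneg (by norm_num)
  by_contra hc
  nlinarith

theorem Nn_triple (a : E2) : ¬ (Nn 0 a ∧ Nn 1 a ∧ Nn 2 a) := by
  rintro ⟨h0, h1, h2⟩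
  linarith [Nn_third h0, Nn_third h1, Nn_third h2, bt_sum a]

theorem Nn_far {i k : Fin 3} (hik : i ≠ k) {a : E2} (h : Nn k a) (j l : Fin 3) :
    (1 / 3 - ((if k = l then 1 else 0) + 2 * (if k = j then 1 else 0)
      - (if i = l then 1 else 0) - 2 * (if i = j then 1 else 0) - 6) / 9) / 2 - 2 / 9
      ≤ dist (Smap i (Smap j (ve l))) a := by
  obtain ⟨y, hy, hd⟩ := h
  have h1 := bt_half hik (Smap k y) (Smap i (Smap j (ve l)))
  have h2 := dist_triangle_right (Smap k y) (Smap i (Smap j (ve l))) a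
  simp only [bt_Smap, bt_ve] at h1
  have h3 := hy k
  have h4 := bt_le_one hy i
  rw [if_neg hik, if_neg hik.symm] at h1
  simp only [if_true] at h1
  linarith

theorem count (α : Finset E2) (N : Fin 3 → E2 → Prop) [∀ i, DecidablePred (N i)]
    (hN : ∀ a, ¬ (N 0 a ∧ N 1 a ∧ N 2 a)) :
    ∑ i, (2 * ((α.filter fun a => N i a ∧ ∀ k, k ≠ i → ¬ N k a).card : ℝ)
      + ∑ j, (if (j ≠ i ∧ ∃ a ∈ α, N i a ∧ N j a) then (1 : ℝ) else 0)) ≤ 2 * (α.card : ℝ) := by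
  classical
  have h1 : ∀ i j : Fin 3, (if (j ≠ i ∧ ∃ a ∈ α, N i a ∧ N j a) then (1 : ℝ) else 0)
      ≤ ∑ a ∈ α, if (j ≠ i ∧ N i a ∧ N j a) then (1 : ℝ) else 0 := by
    intro i j
    split_ifs with h
    · obtain ⟨hj, a, ha, hh⟩ := h
      refine le_trans ?_ (Finset.single_le_sum (f := fun a => if (j ≠ i ∧ N i a ∧ N j a) then (1 : ℝ) else 0)
        (fun b _ => by split_ifs <;> norm_num) ha)
      simp [hj, hh]
    · exact Finset.sum_nonneg fun b _ => by split_ifs <;> norm_num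
  have h2 : ∀ i : Fin 3, ((α.filter fun a => N i a ∧ ∀ k, k ≠ i → ¬ N k a).card : ℝ)
      = ∑ a ∈ α, if (N i a ∧ ∀ k, k ≠ i → ¬ N k a) then (1 : ℝ) else 0 := by
    intro i
    rw [Finset.card_filter]; push_cast; rfl
  calc _ ≤ ∑ i, (2 * (∑ a ∈ α, if (N i a ∧ ∀ k, k ≠ i → ¬ N k a) then (1 : ℝ) else 0)
      + ∑ j, ∑ a ∈ α, if (j ≠ i ∧ N i a ∧ N j a) then (1 : ℝ) else 0) := by
        refine Finset.sum_le_sum fun i _ => ?_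
        rw [h2]
        have := Finset.sum_le_sum fun j (_ : j ∈ Finset.univ) => h1 i j
        linarith
    _ = ∑ a ∈ α, ∑ i, (2 * (if (N i a ∧ ∀ k, k ≠ i → ¬ N k a) then (1 : ℝ) else 0)
      + ∑ j, if (j ≠ i ∧ N i a ∧ N j a) then (1 : ℝ) else 0) := by
        rw [Finset.sum_comm]
        refine Finset.sum_congr rfl fun i _ => ?_
        rw [Finset.sum_add_distrib, Finset.mul_sum, Finset.sum_comm]
    _ ≤ ∑ a ∈ α, 2 := by
        refine Finset.sum_le_sum fun a _ => ?_
        have := hN a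
        simp only [Fin.sum_univ_three, Fin.forall_fin_succ]
        by_cases p0 : N 0 a <;> by_cases p1 : N 1 a <;> by_cases p2 : N 2 a <;>
          simp_all <;> norm_num
    _ = _ := by simp; ring

theorem claim_one [IsProbabilityMeasure P] (hP : Inv P) (α : Finset E2) (hn : α.Nonempty) :
    13 / 486 ≤ Er P (α : Set E2) + 2 / 729 * (α.card : ℝ) := by
  classical
  have hf := α.finite_toSet
  have hn' : (α : Set E2).Nonempty := hn
  have hc := count α Nn Nn_triple
  have key : ∀ i : Fin 3, (39 - 6 * (2 * ((α.filter fun a => Nn i a ∧ ∀ k, k ≠ i → ¬ Nn k a).card : ℝ)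
      + ∑ j, (if (j ≠ i ∧ ∃ a ∈ α, Nn i a ∧ Nn j a) then (1 : ℝ) else 0))) / 162
      ≤ Er P (Sinv i '' (α : Set E2)) := by
    intro i
    have hv := vert1 hP (hf.image (Sinv i)) (hn'.image _)
    have hl := local_bound (α.filter fun a => Nn i a ∧ ∀ k, k ≠ i → ¬ Nn k a)
      (fun b t => 3 * bt t (Sinv i b))
      (fun j => decide (j ≠ i ∧ ∃ a ∈ α, Nn i a ∧ Nn j a))
      (fun j l => 18 * Metric.infDist (Smap j (ve l)) (Sinv i '' (α : Set E2)) ^ 2) ?_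
    · simp only [decide_eq_true_eq, ← Finset.mul_sum] at hl
      linarith
    intro j l
    obtain ⟨a, ha, e⟩ := near hf hn' (Smap i (Smap j (ve l)))
    have e' : Metric.infDist (Smap j (ve l)) (Sinv i '' (α : Set E2))
        = 3 * dist (Smap i (Smap j (ve l))) a := by
      rw [← e, infDist_Sinv hf hn']; ring
    have hd0 : 0 ≤ dist (Smap i (Smap j (ve l))) a := dist_nonneg
    rw [e']
    have big : ∀ r, r ≤ dist (Smap i (Smap j (ve l))) a → 0 ≤ r →
        162 * r ^ 2 ≤ 18 * (3 * dist (Smap i (Smap j (ve l))) a) ^ 2 := by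
      intro r h1 h2; nlinarith
    have thr8 : thrC (decide (j ≠ i ∧ ∃ a ∈ α, Nn i a ∧ Nn j a)) (l = j) ≤ 8 := by
      unfold thrC; split_ifs <;> norm_num
    by_cases hi : Nn i a
    · by_cases hk : ∃ k, k ≠ i ∧ Nn k a
      · right
        obtain ⟨k, hki, hk⟩ := hk
        have hfar := Nn_far hki.symm hk j l
        by_cases hjk : j = k
        · subst hjk
          have hfl : decide (j ≠ i ∧ ∃ a ∈ α, Nn i a ∧ Nn j a) = true := by
            rw [decide_eq_true_eq]; exact ⟨hki, a, ha, hi, hk⟩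
          rw [hfl]
          unfold thrC
          rw [if_pos rfl]
          rw [if_neg hki.symm] at hfar
          simp only [if_true] at hfar
          split_ifs with hl
          · subst hl
            rw [if_neg hki.symm] at hfar
            simp only [if_true] at hfar
            refine le_trans ?_ (big (1 / 9) (by linarith) (by norm_num))
            norm_num
          · rw [if_neg (Ne.symm hl)] at hfar
            refine le_trans ?_ (big (1 / 6) ?_ (by norm_num))
            · norm_num
            · split_ifs at hfar <;> linarith
        · refine thr8.trans (le_trans ?_ (big (2 / 9) ?_ (by norm_num)))
          · norm_num
          · rw [if_neg (Ne.symm hjk)] at hfar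
            split_ifs at hfar <;> linarith
      · left
        refine ⟨a, ?_, le_of_eq ?_⟩
        · rw [Finset.mem_filter]
          exact ⟨ha, hi, fun k h1 h2 => hk ⟨k, h1, h2⟩⟩
        · rw [dist_Sinv, mul_div_cancel₀ _ (by norm_num : (3 : ℝ) ≠ 0), dist_eq_norm, norm_sq_bt]
          simp only [nrm, Fin.sum_univ_three, bt_Smap, bt_ve]
          ring
    · right
      refine thr8.trans (le_trans ?_ (big (2 / 9) ?_ (by norm_num)))
      · norm_num
      · by_contra hc
        exact hi ⟨Smap j (ve l), TT_Smap j (ve_mem l), not_le.mp hc⟩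
  rw [Er_split hP hf hn']
  have := Finset.sum_le_sum fun i (_ : i ∈ Finset.univ) => key i
  rw [← Finset.sum_div, Finset.sum_sub_distrib, ← Finset.mul_sum] at this
  simp only [Finset.sum_const, Finset.card_univ, Fintype.card_fin] at this
  norm_num at this hc ⊢
  linarith

end RM

/-! ### Part 6: the inductive step of the lower bound -/

namespace RM

variable {P : Measure E2}

theorem int_cell [IsProbabilityMeasure P] (hP : Inv P) {f : E2 → ℝ} (hf : Continuous f)
    (h0 : ∀ x, 0 ≤ f x) (u : Fin 3) : (1 / 3) * ∫ x, f (Smap u x) ∂P ≤ ∫ x, f x ∂P := by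
  rw [inv_int hP hf]
  gcongr
  exact Finset.single_le_sum (f := fun j => ∫ x, f (Smap j x) ∂P)
    (fun j _ => integral_nonneg fun x => h0 _) (Finset.mem_univ u)

theorem int_mono2 [IsProbabilityMeasure P] (hP : Inv P) {f g : E2 → ℝ} (hf : Continuous f)
    (hg : Continuous g) (h : ∀ u v, ∀ x ∈ TT, f (Smap u (Smap v x)) ≤ g (Smap u (Smap v x))) :
    ∫ x, f x ∂P ≤ ∫ x, g x ∂P := by
  rw [inv_int hP hf, inv_int hP hg]
  refine mul_le_mul_of_nonneg_left (Finset.sum_le_sum fun u _ => ?_) (by norm_num)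
  have hfu := hf.comp (Smap_continuous u)
  have hgu := hg.comp (Smap_continuous u)
  have e1 := inv_int hP hfu
  have e2 := inv_int hP hgu
  simp only [Function.comp_apply] at e1 e2
  rw [e1, e2]
  refine mul_le_mul_of_nonneg_left (Finset.sum_le_sum fun v _ => ?_) (by norm_num)
  refine integral_mono_ae (cont_int hP (hfu.comp (Smap_continuous v)))
    (cont_int hP (hgu.comp (Smap_continuous v))) ?_
  filter_upwards [tri_ae hP] with x hx using h u v x hx

theorem gain [IsProbabilityMeasure P] (hP : Inv P) {G : Set E2} (hn : G.Nonempty)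
    (u v : Fin 3) {x₀ : E2} (hx₀ : x₀ ∈ TT)
    (hd : 1 / 2 ≤ Metric.infDist (Smap u (Smap v x₀)) G) :
    Er P (insert (Smap u (Smap v x₀)) G) + 5 / 324 ≤ Er P G := by
  set x := Smap u (Smap v x₀) with hx
  let g : E2 → ℝ := fun y => Metric.infDist y G ^ 2 - Metric.infDist y (insert x G) ^ 2
  have hg : Continuous g := (inf_cont G).sub (inf_cont _)
  have hg0 : ∀ y, 0 ≤ g y := by
    intro y
    have := pow_le_pow_left₀ Metric.infDist_nonneg
      (Metric.infDist_le_infDist_of_subset (x := y) (Set.subset_insert x G) hn) 2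
    simp only [g]; linarith
  have h1 := int_cell hP hg hg0 u
  have h2 := int_cell hP (hg.comp (Smap_continuous u)) (fun y => hg0 _) v
  simp only [Function.comp_apply] at h2
  have h3 : (5 / 36 : ℝ) ≤ ∫ y, g (Smap u (Smap v y)) ∂P := by
    have hc : ∫ _ : E2, (5 / 36 : ℝ) ∂P = 5 / 36 := by simp
    rw [← hc]
    refine integral_mono_ae (integrable_const _)
      (cont_int hP ((hg.comp (Smap_continuous u)).comp (Smap_continuous v))) ?_
    filter_upwards [tri_ae hP] with y hy
    have hdist : dist (Smap u (Smap v y)) x ≤ 1 / 9 := by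
      rw [hx, dist_Smap, dist_Smap]
      linarith [TT_dist hy hx₀]
    have a1 : Metric.infDist (Smap u (Smap v y)) (insert x G) ≤ 1 / 9 :=
      (Metric.infDist_le_dist_of_mem (Set.mem_insert x G)).trans hdist
    have a2 : 7 / 18 ≤ Metric.infDist (Smap u (Smap v y)) G := by
      have := Metric.infDist_le_infDist_add_dist (s := G) (x := x) (y := Smap u (Smap v y))
      rw [dist_comm] at this
      linarith
    have a3 : 0 ≤ Metric.infDist (Smap u (Smap v y)) (insert x G) := Metric.infDist_nonneg
    simp only [g]
    nlinarith
  have h4 : ∫ y, g y ∂P = Er P G - Er P (insert x G) :=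
    integral_sub (cont_int hP (inf_cont G)) (cont_int hP (inf_cont _))
  linarith

theorem Er_nonneg (α : Set E2) : 0 ≤ Er P α := integral_nonneg fun _ => sq_nonneg _

open Classical in
theorem absorb [IsProbabilityMeasure P] (hP : Inv P) (C lam : ℝ) (hl0 : 0 < lam)
    (hl1 : lam ≤ 5 / 324)
    (hyp : ∀ B : Finset E2, B.Nonempty → C ≤ Er P (B : Set E2) + lam * B.card)
    (F : Finset E2) (hF : ∀ x ∈ TT, ∀ a ∈ F, 1 / 2 ≤ dist x a) (m : ℕ) :
    ∀ B : Finset E2, (B ∪ F).Nonempty → C ≤ lam * (B.card + m) →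
      C ≤ Er P ((B ∪ F : Finset E2) : Set E2) + lam * B.card := by
  induction m with
  | zero =>
    intro B _ h
    have := Er_nonneg (P := P) ((B ∪ F : Finset E2) : Set E2)
    simp at h
    linarith
  | succ m ih =>
    intro B hne h
    have hf := (B ∪ F).finite_toSet
    have hne' : ((B ∪ F : Finset E2) : Set E2).Nonempty := hne
    by_cases hex : ∃ u v, ∃ x₀ ∈ TT,
        1 / 2 ≤ Metric.infDist (Smap u (Smap v x₀)) ((B ∪ F : Finset E2) : Set E2)
    · obtain ⟨u, v, x₀, hx₀, hd⟩ := hex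
      have hg := gain hP hne' u v hx₀ hd
      have hx : Smap u (Smap v x₀) ∉ B := by
        intro hx
        have : Smap u (Smap v x₀) ∈ ((B ∪ F : Finset E2) : Set E2) := by
          rw [Finset.mem_coe]; exact Finset.mem_union_left _ hx
        rw [Metric.infDist_zero_of_mem this] at hd
        norm_num at hd
      have hcard := Finset.card_insert_of_notMem hx
      have h2 := ih (insert (Smap u (Smap v x₀)) B) (by
        rw [Finset.insert_union]; exact Finset.insert_nonempty _ _) (by
        rw [hcard]; push_cast at h ⊢; linarith)
      rw [Finset.insert_union, Finset.coe_insert, hcard] at h2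
      push_cast at h2 hg ⊢
      linarith
    · push Not at hex
      have hnear : ∀ u v, ∀ x ∈ TT, ∃ b ∈ B,
          Metric.infDist (Smap u (Smap v x)) ((B ∪ F : Finset E2) : Set E2)
            = dist (Smap u (Smap v x)) b := by
        intro u v x hx
        obtain ⟨a, ha, e⟩ := near hf hne' (Smap u (Smap v x))
        rw [Finset.mem_coe, Finset.mem_union] at ha
        rcases ha with ha | ha
        · exact ⟨a, ha, e⟩
        · have h1 := hF _ (TT_Smap u (TT_Smap v hx)) a ha
          have h2 := hex u v x hx
          linarith
      have hBn : B.Nonempty := by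
        obtain ⟨b, hb, _⟩ := hnear 0 0 cc cc_mem
        exact ⟨b, hb⟩
      refine (hyp B hBn).trans ?_
      have : Er P (B : Set E2) ≤ Er P ((B ∪ F : Finset E2) : Set E2) := by
        refine int_mono2 hP (inf_cont _) (inf_cont _) fun u v x hx => ?_
        obtain ⟨b, hb, e⟩ := hnear u v x hx
        rw [e]
        exact pow_le_pow_left₀ Metric.infDist_nonneg (Metric.infDist_le_dist_of_mem hb) 2
      linarith

theorem near_disj {i j : Fin 3} (hij : i ≠ j) {a x y : E2} (hx : x ∈ TT) (hy : y ∈ TT)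
    (h1 : dist (Smap i x) a < 1 / 6) (h2 : dist (Smap j y) a < 1 / 6) : False := by
  have h3 := bt_half hij (Smap j y) (Smap i x)
  have h4 := dist_triangle_right (Smap j y) (Smap i x) a
  simp only [bt_Smap, if_neg hij, if_neg hij.symm, if_true] at h3
  have := hx i
  have := hy j
  have := bt_le_one hx j
  have := bt_le_one hy i
  linarith

theorem step [IsProbabilityMeasure P] (hP : Inv P) (C lam : ℝ) (hl0 : 0 < lam)
    (hl1 : lam ≤ 5 / 324)
    (hyp : ∀ B : Finset E2, B.Nonempty → C ≤ Er P (B : Set E2) + lam * B.card)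
    (α : Finset E2) (hn : α.Nonempty) :
    C / 9 ≤ Er P (α : Set E2) + lam / 27 * α.card := by
  classical
  have hf := α.finite_toSet
  have hn' : (α : Set E2).Nonempty := hn
  let Q : Fin 3 → E2 → Prop := fun i a => ∃ x ∈ TT, dist (Smap i x) a < 1 / 6
  have key : ∀ i, C ≤ Er P (Sinv i '' (α : Set E2)) + lam * (α.filter (Q i)).card := by
    intro i
    obtain ⟨m, hm⟩ := exists_nat_ge (C / lam)
    rw [div_le_iff₀ hl0] at hm
    have hun : (α.filter (Q i)).image (Sinv i) ∪ (α.filter fun a => ¬ Q i a).image (Sinv i)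
        = α.image (Sinv i) := by
      rw [← Finset.image_union, Finset.filter_union_filter_not_eq]
    have h := absorb hP C lam hl0 hl1 hyp ((α.filter fun a => ¬ Q i a).image (Sinv i)) ?_ m
      ((α.filter (Q i)).image (Sinv i)) (by rw [hun]; exact hn.image _) (by
        have : 0 ≤ lam * (((α.filter (Q i)).image (Sinv i)).card : ℝ) := by positivity
        linarith)
    · rw [hun, Finset.coe_image, Finset.card_image_of_injective _ (Sinv_inj i)] at h
      exact h
    · intro x hx b hb
      rw [Finset.mem_image] at hb
      obtain ⟨a, ha, rfl⟩ := hb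
      rw [Finset.mem_filter] at ha
      have h1 : 1 / 6 ≤ dist (Smap i x) a := by
        by_contra hc
        exact ha.2 ⟨x, hx, not_le.mp hc⟩
      rw [dist_Sinv] at h1
      linarith
  have hcard : ∑ i, ((α.filter (Q i)).card : ℝ) ≤ α.card := by
    rw [← Nat.cast_sum, Nat.cast_le, ← Finset.card_biUnion]
    · refine Finset.card_le_card fun a ha => ?_
      rw [Finset.mem_biUnion] at ha
      obtain ⟨i, _, hi⟩ := ha
      exact (Finset.mem_filter.mp hi).1
    · intro i _ j _ hij
      rw [Function.onFun, Finset.disjoint_left]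
      intro a hi hj
      obtain ⟨x, hx, h1⟩ := (Finset.mem_filter.mp hi).2
      obtain ⟨y, hy, h2⟩ := (Finset.mem_filter.mp hj).2
      exact near_disj hij hx hy h1 h2
  rw [Er_split hP hf hn']
  have k0 := key 0
  have k1 := key 1
  have k2 := key 2
  rw [Fin.sum_univ_three] at hcard ⊢
  nlinarith [mul_le_mul_of_nonneg_left hcard hl0.le]

theorem claim [IsProbabilityMeasure P] (hP : Inv P) (k : ℕ) :
    ∀ α : Finset E2, α.Nonempty →
      13 / 54 / 9 ^ (k + 1) ≤ Er P (α : Set E2) + 2 / 27 ^ (k + 2) * (α.card : ℝ) := by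
  induction k with
  | zero =>
    intro α hn
    have := claim_one hP α hn
    norm_num at this ⊢
    exact this
  | succ k ih =>
    intro α hn
    have h27 : (1 : ℝ) ≤ 27 ^ k := one_le_pow₀ (by norm_num)
    have hl : (2 : ℝ) / 27 ^ (k + 2) ≤ 5 / 324 := by
      rw [div_le_div_iff₀ (by positivity) (by norm_num), pow_add]
      nlinarith
    have h := step hP _ _ (by positivity) hl ih α hn
    convert h using 1
    · rw [pow_succ 9 (k + 1)]; field_simp
    · congr 2
      rw [pow_succ 27 (k + 2)]; field_simp

end RM

/-! ### Part 7: words and upper bounds -/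

namespace RM

variable {P : Measure E2}

theorem Sword_zero (ω : Fin 0 → Fin 3) (x : E2) : Sword ω x = x := by
  simp [Sword]

theorem Sword_succ {k : ℕ} (ω : Fin (k + 1) → Fin 3) (x : E2) :
    Sword ω x = Smap (ω 0) (Sword (fun i => ω i.succ) x) := by
  simp [Sword, List.ofFn_succ]

theorem Sword_cons {k : ℕ} (j : Fin 3) (ω : Fin k → Fin 3) (x : E2) :
    Sword (Fin.cons j ω : Fin (k + 1) → Fin 3) x = Smap j (Sword ω x) := by
  rw [Sword_succ]; simp

theorem dist_Sword {k : ℕ} (ω : Fin k → Fin 3) (x y : E2) :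
    dist (Sword ω x) (Sword ω y) = dist x y / 3 ^ k := by
  induction k with
  | zero => simp [Sword_zero]
  | succ k ih => rw [Sword_succ, Sword_succ, dist_Smap, ih, pow_succ, div_div]

theorem inv_word [IsProbabilityMeasure P] (hP : Inv P) (k : ℕ) {f : E2 → ℝ} (hf : Continuous f) :
    ∫ x, f x ∂P = (1 / 3 ^ k) * ∑ ω : Fin k → Fin 3, ∫ x, f (Sword ω x) ∂P := by
  induction k generalizing f with
  | zero => simp [Sword_zero]
  | succ k ih =>
    rw [inv_int hP hf]
    have e : ∀ j, ∫ x, f (Smap j x) ∂P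
        = (1 / 3 ^ k) * ∑ ω : Fin k → Fin 3, ∫ x, f (Smap j (Sword ω x)) ∂P := fun j =>
      ih (hf.comp (Smap_continuous j))
    have e2 : ∑ ω : Fin (k + 1) → Fin 3, ∫ x, f (Sword ω x) ∂P
        = ∑ j, ∑ ω : Fin k → Fin 3, ∫ x, f (Smap j (Sword ω x)) ∂P := by
      rw [← (Fin.consEquiv (fun _ : Fin (k + 1) => Fin 3)).sum_comp, Fintype.sum_prod_type]
      refine Finset.sum_congr rfl fun j _ => Finset.sum_congr rfl fun ω _ => ?_
      refine integral_congr_ae (Filter.Eventually.of_forall fun x => ?_)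
      exact congrArg f (Sword_cons j ω x)
    rw [e2]
    simp only [e]
    rw [← Finset.mul_sum, pow_succ]
    field_simp

theorem Sword_continuous {k : ℕ} (ω : Fin k → Fin 3) : Continuous (Sword ω) := by
  induction k with
  | zero =>
    have : Sword ω = id := funext fun x => Sword_zero ω x
    rw [this]; exact continuous_id
  | succ k ih =>
    have : Sword ω = fun x => Smap (ω 0) (Sword (fun i => ω i.succ) x) :=
      funext fun x => Sword_succ ω x
    rw [this]
    exact (Smap_continuous _).comp (ih _)

theorem Er_le_point [IsProbabilityMeasure P] (hP : Inv P) {α : Set E2} {a : E2} (ha : a ∈ α) :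
    Er P α ≤ 1 / 6 + ‖cc - a‖ ^ 2 := by
  rw [← moment hP]
  refine integral_mono_ae (cont_int hP (inf_cont α)) (cont_int hP (by fun_prop)) ?_
  refine Filter.Eventually.of_forall fun x => ?_
  simp only [← dist_eq_norm]
  exact pow_le_pow_left₀ Metric.infDist_nonneg (Metric.infDist_le_dist_of_mem ha) 2

/-- The midpoint of the centroids of the two lower cells. -/
def qq : E2 := pt (1 / 2) (Real.sqrt 3 / 18)

theorem two_upper [IsProbabilityMeasure P] (hP : Inv P) :
    Er P {Smap 2 cc, qq} ≤ 5 / 54 := by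
  have hf : ({Smap 2 cc, qq} : Set E2).Finite := by simp
  have hn : ({Smap 2 cc, qq} : Set E2).Nonempty := ⟨_, Set.mem_insert _ _⟩
  have h := s3
  have b0 : bt 0 qq = 4 / 9 := by
    simp [bt, qq, pt_zero, pt_one]; field_simp; norm_num
  have b1 : bt 1 qq = 4 / 9 := by
    simp [bt, qq, pt_zero, pt_one]; field_simp; norm_num
  have b2 : bt 2 qq = 1 / 9 := by
    simp [bt, qq, pt_zero, pt_one]; field_simp; norm_num
  rw [Er_split hP hf hn, Fin.sum_univ_three]
  have hq : qq ∈ ({Smap 2 cc, qq} : Set E2) := by simp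
  have h0 := Er_le_point hP (Set.mem_image_of_mem (Sinv 0) hq)
  have h1 := Er_le_point hP (Set.mem_image_of_mem (Sinv 1) hq)
  have h2 := Er_le_point hP (Set.mem_image_of_mem (Sinv 2) (Set.mem_insert (Smap 2 cc) {qq}))
  simp [norm_sq_bt, Fin.sum_univ_three, bt_Sinv, bt_Smap, bt_cc, b0, b1, b2] at h0 h1 h2
  norm_num at h0 h1 h2
  linarith

theorem err_empty [IsProbabilityMeasure P] : err P ∅ = ⊤ := by
  simp [err]

theorem upper [IsProbabilityMeasure P] (hP : Inv P) (k : ℕ) (τ : Fin k → Fin 3) {α : Set E2}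
    (hf : α.Finite) (hn : α.Nonempty) (hα : Er P α ≤ 5 / 54) :
    Er P ((fun ω : Fin k → Fin 3 => Sword ω cc) '' {ω | ω ≠ τ} ∪ Sword τ '' α)
      ≤ (1 / 3 ^ k) * ((3 ^ k / 6 - 2 / 27) / 9 ^ k) := by
  classical
  set β := (fun ω : Fin k → Fin 3 => Sword ω cc) '' {ω | ω ≠ τ} ∪ Sword τ '' α with hβ
  unfold Er
  rw [inv_word hP k (inf_cont β)]
  refine mul_le_mul_of_nonneg_left ?_ (by positivity)
  have h9 : (3 ^ k : ℝ) ^ 2 = 9 ^ k := by rw [← pow_mul, mul_comm, pow_mul]; norm_num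
  have key : ∀ ω : Fin k → Fin 3, ∫ x, Metric.infDist (Sword ω x) β ^ 2 ∂P
      ≤ 1 / 6 / 9 ^ k - (if ω = τ then 2 / 27 / 9 ^ k else 0) := by
    intro ω
    have hc := cont_int hP ((inf_cont β).comp (Sword_continuous ω))
    split_ifs with h
    · subst h
      have : ∫ x, Metric.infDist (Sword ω x) β ^ 2 ∂P ≤ ∫ x, Metric.infDist x α ^ 2 / 9 ^ k ∂P := by
        refine integral_mono_ae hc (cont_int hP ((inf_cont α).div_const _)) ?_
        refine Filter.Eventually.of_forall fun x => ?_
        obtain ⟨a, ha, e⟩ := near hf hn x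
        have h1 : Metric.infDist (Sword ω x) β ≤ dist x a / 3 ^ k := by
          rw [← dist_Sword ω]
          exact Metric.infDist_le_dist_of_mem (Or.inr ⟨a, ha, rfl⟩)
        simp only [e]
        rw [← h9, ← div_pow]
        exact pow_le_pow_left₀ Metric.infDist_nonneg h1 2
      refine this.trans ?_
      rw [integral_div, ← sub_div]
      gcongr
      unfold Er at hα
      linarith
    · have : ∫ x, Metric.infDist (Sword ω x) β ^ 2 ∂P ≤ ∫ x, ‖x - cc‖ ^ 2 / 9 ^ k ∂P := by
        refine integral_mono_ae hc (cont_int hP (by fun_prop)) ?_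
        refine Filter.Eventually.of_forall fun x => ?_
        have h1 : Metric.infDist (Sword ω x) β ≤ dist x cc / 3 ^ k := by
          rw [← dist_Sword ω]
          exact Metric.infDist_le_dist_of_mem (Or.inl ⟨ω, h, rfl⟩)
        simp only [← dist_eq_norm]
        rw [← h9, ← div_pow]
        exact pow_le_pow_left₀ Metric.infDist_nonneg h1 2
      refine this.trans ?_
      rw [integral_div, moment hP]
      simp
  refine (Finset.sum_le_sum fun ω _ => key ω).trans (le_of_eq ?_)
  rw [Finset.sum_sub_distrib, Finset.sum_ite_eq' Finset.univ τ]
  simp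
  ring

theorem main [IsProbabilityMeasure P] (hP : Inv P) (ℓ : ℕ) (hℓ : 1 ≤ ℓ) (τ : Fin ℓ → Fin 3)
    (α₂ : Set E2) (hα₂ : IsOptimal P 2 α₂) :
    IsOptimal P (3 ^ ℓ + 1)
      ((fun ω : Fin ℓ → Fin 3 => Sword ω cc) '' {ω | ω ≠ τ} ∪ Sword τ '' α₂) := by
  classical
  obtain ⟨hf, hcard, herr⟩ := hα₂
  have hle : err P α₂ ≤ ENNReal.ofReal (5 / 54) := by
    rw [herr]
    have hf2 : ({Smap 2 cc, qq} : Set E2).Finite := by simp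
    refine (iInf₂_le ({Smap 2 cc, qq} : Set E2) ⟨hf2, (Set.ncard_insert_le _ _).trans (by rw [Set.ncard_singleton])⟩).trans ?_
    rw [err_eq hP hf2 ⟨_, Set.mem_insert _ _⟩]
    exact ENNReal.ofReal_le_ofReal (two_upper hP)
  have hn : α₂.Nonempty := by
    by_contra hc
    rw [Set.not_nonempty_iff_eq_empty] at hc
    rw [hc, err_empty] at hle
    simp at hle
  rw [err_eq hP hf hn, ENNReal.ofReal_le_ofReal_iff (by norm_num)] at hle
  have hu := upper hP ℓ τ hf hn hle
  set β := (fun ω : Fin ℓ → Fin 3 => Sword ω cc) '' {ω | ω ≠ τ} ∪ Sword τ '' α₂ with hβ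
  have hβf : β.Finite := ((Set.toFinite _).image _).union (hf.image _)
  have hβn : β.Nonempty := (hn.image _).inr
  have hβc : β.ncard ≤ 3 ^ ℓ + 1 := by
    have h1 : ({ω | ω ≠ τ} : Set (Fin ℓ → Fin 3)).ncard + 1 = 3 ^ ℓ := by
      have := Set.ncard_add_ncard_compl ({τ} : Set (Fin ℓ → Fin 3))
      rw [Set.ncard_singleton, Nat.card_eq_fintype_card, Fintype.card_fun, Fintype.card_fin,
        Fintype.card_fin] at this
      rw [← this, add_comm]
      rfl
    have h2 := Set.ncard_union_le ((fun ω : Fin ℓ → Fin 3 => Sword ω cc) '' {ω | ω ≠ τ})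
      (Sword τ '' α₂)
    have h3 := Set.ncard_image_le (f := fun ω : Fin ℓ → Fin 3 => Sword ω cc)
      (Set.toFinite {ω : Fin ℓ → Fin 3 | ω ≠ τ})
    have h4 := Set.ncard_image_le (f := Sword τ) hf
    rw [← hβ] at h2
    omega
  refine ⟨hβf, hβc, le_antisymm ?_ (iInf₂_le β ⟨hβf, hβc⟩)⟩
  refine le_iInf₂ fun γ hγ => ?_
  obtain ⟨hγf, hγc⟩ := hγ
  rcases γ.eq_empty_or_nonempty with rfl | hγn
  · rw [err_empty]; exact le_top
  rw [err_eq hP hβf hβn, err_eq hP hγf hγn]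
  refine ENNReal.ofReal_le_ofReal (hu.trans ?_)
  obtain ⟨k, rfl⟩ : ∃ k, ℓ = k + 1 := ⟨ℓ - 1, by omega⟩
  have hcl := claim hP k hγf.toFinset (by simpa using hγn)
  rw [hγf.coe_toFinset, ← Set.ncard_eq_toFinset_card γ hγf] at hcl
  have hc' : (γ.ncard : ℝ) ≤ 3 ^ (k + 1) + 1 := by exact_mod_cast hγc
  have hmul := mul_le_mul_of_nonneg_left hc' (by positivity : (0 : ℝ) ≤ 2 / 27 ^ (k + 2))
  have e27 : (27 : ℝ) ^ (k + 2) = 27 * (3 ^ (k + 1) * 9 ^ (k + 1)) := by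
    rw [← mul_pow, pow_succ]; norm_num; ring
  have : (1 : ℝ) / 3 ^ (k + 1) * ((3 ^ (k + 1) / 6 - 2 / 27) / 9 ^ (k + 1))
      = 13 / 54 / 9 ^ (k + 1) - 2 / 27 ^ (k + 2) * (3 ^ (k + 1) + 1) := by
    rw [e27]
    have ht : (3 : ℝ) ^ (k + 1) ≠ 0 := by positivity
    have hs : (9 : ℝ) ^ (k + 1) ≠ 0 := by positivity
    generalize (3 : ℝ) ^ (k + 1) = t at ht ⊢
    generalize (9 : ℝ) ^ (k + 1) = s at hs ⊢
    field_simp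
    ring
  linarith

end RM
/-- For n = 3^ℓ + 1 (ℓ ≥ 1), any word τ ∈ {1,2,3}^ℓ and any optimal set of two-means α₂,
the set {S_ω(c) : ω ∈ {1,2,3}^ℓ, ω ≠ τ} ∪ S_τ(α₂) is an optimal set of n-means for the
R-measure P, where c = (1/2, √3/6). -/
theorem stmt_12 (P : Measure E2) [IsProbabilityMeasure P]
    (hP : P = (3 : ℝ≥0∞)⁻¹ • (P.map S1 + P.map S2 + P.map S3))
    (ℓ : ℕ) (hℓ : 1 ≤ ℓ) (τ : Fin ℓ → Fin 3) (α₂ : Set E2) (hα₂ : IsOptimal P 2 α₂) :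
    IsOptimal P (3 ^ ℓ + 1)
      ((fun ω : Fin ℓ → Fin 3 => Sword ω (pt (1/2) (Real.sqrt 3 / 6))) '' {ω | ω ≠ τ}
        ∪ Sword τ '' α₂) := by
  exact RM.main hP ℓ hℓ τ α₂ hα₂

end
end

section
/- Let P be the R-measure and c = (1/2, √3/6). For every positive integer ℓ and n = 3^ℓ, the set { S_ω(c) : ω ∈ {1,2,3}^ℓ } is the unique optimal set of n-means for P, and the quantization error is V_n(P) = (1/6)·(1/9^ℓ). -/
open MeasureTheory ENNReal

noncomputable section

/-! ### Geometry of the base triangle -/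

def r3 : ℝ := Real.sqrt 3

lemma r3_sq : r3 * r3 = 3 := Real.mul_self_sqrt (by norm_num)

/-- Vertices of the triangle. -/
def V : Fin 3 → E2 := ![pt 0 0, pt 1 0, pt (1/2) (r3 / 2)]

/-- The centroid. -/
def cen : E2 := pt (1/2) (r3 / 6)

/-- Barycentric coordinates. -/
def lam : Fin 3 → E2 → ℝ :=
  ![fun x => 1 - x 0 - r3 / 3 * x 1, fun x => x 0 - r3 / 3 * x 1, fun x => 2 * r3 / 3 * x 1]

/-- The triangle in barycentric description. -/
def T0 : Set E2 := {x | ∀ i, 0 ≤ lam i x}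

@[simp] lemma pt_zero (a b : ℝ) : (pt a b) 0 = a := rfl
@[simp] lemma pt_one (a b : ℝ) : (pt a b) 1 = b := rfl

lemma E2_ext {x y : E2} (h0 : x 0 = y 0) (h1 : x 1 = y 1) : x = y := by
  ext i; fin_cases i <;> assumption

lemma nsq (x y : E2) : ‖x - y‖ ^ 2 = (x 0 - y 0) ^ 2 + (x 1 - y 1) ^ 2 := by
  rw [EuclideanSpace.norm_sq_eq]; simp [Fin.sum_univ_two]

lemma lam_sum (x : E2) : ∑ i, lam i x = 1 := by
  simp [Fin.sum_univ_three, lam]; ring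

lemma lam_cont (i : Fin 3) : Continuous (lam i) := by
  fin_cases i <;> simp [lam] <;> fun_prop

lemma lam_rep (x : E2) : ∑ i, lam i x • V i = x := by
  have := r3_sq
  apply E2_ext <;> simp [Fin.sum_univ_three, lam, V] <;> grind

lemma nsq_lam (x y : E2) : ‖x - y‖ ^ 2 = 1 / 2 * ∑ i, (lam i x - lam i y) ^ 2 := by
  have := r3_sq
  rw [nsq]; simp [Fin.sum_univ_three, lam]; grind

lemma lam_cen (i : Fin 3) : lam i cen = 1 / 3 := by
  have := r3_sq
  fin_cases i <;> simp [lam, cen] <;> grind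

lemma lam_V (i j : Fin 3) : lam i (V j) = if i = j then 1 else 0 := by
  have := r3_sq
  fin_cases i <;> fin_cases j <;> simp [lam, V] <;> grind

lemma Smap_eq (i : Fin 3) (x : E2) : Smap i x = (3 : ℝ)⁻¹ • x + (2 / 3 : ℝ) • V i := by
  fin_cases i <;> apply E2_ext <;> simp [Smap, S1, S2, S3, V, r3] <;> ring

lemma lam_Smap (i j : Fin 3) (x : E2) :
    lam i (Smap j x) = lam i x / 3 + if i = j then 2 / 3 else 0 := by
  have := r3_sq
  rw [Smap_eq]
  fin_cases i <;> fin_cases j <;> simp [lam, V] <;> grind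

lemma Smap_cont (i : Fin 3) : Continuous (Smap i) := by
  have : Smap i = fun x => (3 : ℝ)⁻¹ • x + (2 / 3 : ℝ) • V i := funext (Smap_eq i)
  rw [this]; fun_prop

lemma Smap_T0 (i : Fin 3) {x : E2} (hx : x ∈ T0) : Smap i x ∈ T0 := by
  intro j
  rw [lam_Smap]
  have := hx j
  split_ifs <;> positivity

lemma T0_closed : IsClosed T0 := by
  have : T0 = ⋂ i, {x | 0 ≤ lam i x} := by ext; simp [T0]
  rw [this]
  exact isClosed_iInter fun i => isClosed_le continuous_const (lam_cont i)

lemma T0_compact : IsCompact T0 := by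
  apply Metric.isCompact_of_isClosed_isBounded T0_closed
  refine (Metric.isBounded_closedBall (x := cen) (r := 2)).subset ?_
  intro x hx
  rw [Metric.mem_closedBall, dist_eq_norm]
  have h := nsq_lam x cen
  have hs := lam_sum x
  have h0 := hx 0
  have h1 := hx 1
  have h2 := hx 2
  simp only [Fin.sum_univ_three, lam_cen] at h hs
  nlinarith [norm_nonneg (x - cen), mul_nonneg h0 h1, mul_nonneg h0 h2, mul_nonneg h1 h2]

lemma T0_mid {x y : E2} (hx : x ∈ T0) (hy : y ∈ T0) : (1 / 2 : ℝ) • (x + y) ∈ T0 := by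
  intro i
  have h : lam i ((1 / 2 : ℝ) • (x + y)) = 1 / 2 * (lam i x + lam i y) := by
    fin_cases i <;> simp [lam] <;> ring
  rw [h]; have := hx i; have := hy i; positivity

/-- distance between different subcells -/
lemma sub_sep {i j : Fin 3} (hij : i ≠ j) {x y : E2} (hx : x ∈ T0) (hy : y ∈ T0) :
    1 / 3 ≤ ‖Smap i x - Smap j y‖ := by
  have h := nsq_lam (Smap i x) (Smap j y)
  have hle : ∀ z ∈ T0, ∀ k, lam k z ≤ 1 := by
    intro z hz k
    rw [← lam_sum z]
    exact Finset.single_le_sum (fun k _ => hz k) (Finset.mem_univ k)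
  have hp : 1 / 3 ≤ lam i (Smap i x) - lam i (Smap j y) := by
    rw [lam_Smap, lam_Smap, if_pos rfl, if_neg hij]
    linarith [hx i, hle y hy i]
  have hq : 1 / 3 ≤ lam j (Smap j y) - lam j (Smap i x) := by
    rw [lam_Smap, lam_Smap, if_pos rfl, if_neg hij.symm]
    linarith [hy j, hle x hx j]
  have hsum : (lam i (Smap i x) - lam i (Smap j y)) ^ 2 + (lam j (Smap i x) - lam j (Smap j y)) ^ 2
      ≤ ∑ k, (lam k (Smap i x) - lam k (Smap j y)) ^ 2 := by
    rw [← Finset.sum_pair (f := fun k => (lam k (Smap i x) - lam k (Smap j y)) ^ 2) hij]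
    exact Finset.sum_le_sum_of_subset_of_nonneg (Finset.subset_univ _) fun _ _ _ => sq_nonneg _
  have key : (1 / 3 : ℝ) ^ 2 ≤ ‖Smap i x - Smap j y‖ ^ 2 := by
    rw [h]; nlinarith
  exact (abs_le_of_sq_le_sq' key (norm_nonneg _)).2

lemma lin_bound {p q s : ℝ} (h : p + q + s = 0) (h2 : 1 / 2 * (p ^ 2 + q ^ 2 + s ^ 2) < 1 / 2) :
    p ≤ 5 / 6 := by
  obtain rfl : s = - p - q := by linarith
  nlinarith [sq_nonneg (p + 2 * q)]

/-- If all three subcells are hit by the ball of squared radius 1/2 around `a`, then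
no point at distance at least one from the triangle is hit. -/
lemma full_hit {a z : E2} (hz : ‖z - a‖ ^ 2 < 1 / 2) (hfar : ∀ y ∈ T0, 1 ≤ ‖z - y‖)
    (hhit : ∀ i, ∃ x ∈ T0, ‖Smap i x - a‖ ^ 2 < 1 / 2) : False := by
  have hb : ∀ i, -(1 / 6) ≤ lam i a := by
    intro i
    obtain ⟨x, hx, hxa⟩ := hhit i
    have h := nsq_lam (Smap i x) a
    have hs := lam_sum (Smap i x)
    have ha := lam_sum a
    have h2 : 2 / 3 ≤ lam i (Smap i x) := by
      rw [lam_Smap]; have := hx i; simp; positivity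
    rw [h] at hxa
    simp only [Fin.sum_univ_three] at hxa hs ha
    generalize Smap i x = w at *
    have h0 : lam 0 w - lam 0 a + (lam 1 w - lam 1 a) + (lam 2 w - lam 2 a) = 0 := by linarith
    have key : lam i w - lam i a ≤ 5 / 6 := by
      fin_cases i
      · exact lin_bound h0 hxa
      · exact lin_bound (q := lam 0 w - lam 0 a) (s := lam 2 w - lam 2 a)
          (by simp; linarith) (by simp; linarith)
      · exact lin_bound (q := lam 0 w - lam 0 a) (s := lam 1 w - lam 1 a)
          (by simp; linarith) (by simp; linarith)
    linarith
  have ha := lam_sum a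
  simp only [Fin.sum_univ_three] at ha
  have b0 := hb 0
  have b1 := hb 1
  have b2 := hb 2
  set y : E2 := (1 / 3 : ℝ) • cen + (2 / 3 : ℝ) • a with hy
  have hyT : y ∈ T0 := by
    intro i
    have h : lam i y = 1 / 3 * lam i cen + 2 / 3 * lam i a := by
      rw [hy]; fin_cases i <;> simp [lam] <;> ring
    rw [h, lam_cen]; linarith [hb i]
  have h1 := hfar y hyT
  have h2 : ‖a - cen‖ ^ 2 ≤ 3 / 4 := by
    rw [nsq_lam]; simp only [Fin.sum_univ_three, lam_cen]
    nlinarith [mul_nonneg (by linarith : 0 ≤ lam 0 a + 1 / 6) (by linarith : 0 ≤ lam 1 a + 1 / 6),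
      mul_nonneg (by linarith : 0 ≤ lam 0 a + 1 / 6) (by linarith : 0 ≤ lam 2 a + 1 / 6),
      mul_nonneg (by linarith : 0 ≤ lam 1 a + 1 / 6) (by linarith : 0 ≤ lam 2 a + 1 / 6)]
  have h3 : z - y = (z - a) + (1 / 3 : ℝ) • (a - cen) := by rw [hy]; module
  have h4 : ‖z - y‖ ≤ ‖z - a‖ + 1 / 3 * ‖a - cen‖ := by
    rw [h3]; refine (norm_add_le _ _).trans ?_
    rw [norm_smul]; norm_num
  have h5 : ‖z - a‖ < 0.7072 := by nlinarith [norm_nonneg (z - a)]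
  have h6 : ‖a - cen‖ < 0.8661 := by nlinarith [norm_nonneg (a - cen)]
  linarith

lemma vert_nsq (a : E2) (i : Fin 3) :
    ‖V i - a‖ ^ 2 = ‖a - cen‖ ^ 2 + 2 / 3 - lam i a := by
  have ha := lam_sum a
  rw [nsq_lam, nsq_lam]
  simp only [Fin.sum_univ_three, lam_cen, lam_V] at *
  fin_cases i <;> simp <;> grind

/-- the excess function -/
def ex (a x : E2) : ℝ := max (‖x - a‖ ^ 2 - 1 / 2) 0

lemma ex_nonneg (a x : E2) : 0 ≤ ex a x := le_max_right _ _

lemma ex_cont (a : E2) : Continuous (ex a) := by unfold ex; fun_prop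

lemma ex_vert (a : E2) : 1 / 3 * ∑ i, ex a (V i) ≤ ‖a - cen‖ ^ 2 := by
  have h := fun i => vert_nsq a i
  have ha := lam_sum a
  have hn := nsq_lam a cen
  have p0 := sq_nonneg ‖V 0 - a‖
  have p1 := sq_nonneg ‖V 1 - a‖
  have p2 := sq_nonneg ‖V 2 - a‖
  simp only [ex, Fin.sum_univ_three, lam_cen] at *
  rw [h] at *
  rw [h] at *
  rw [h] at *
  generalize ‖a - cen‖ ^ 2 = t at *
  generalize lam 0 a = x at *
  generalize lam 1 a = y at *
  generalize lam 2 a = z at *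
  obtain rfl : z = 1 - x - y := by linarith
  rcases max_cases (t + 2 / 3 - x - 1 / 2) 0 with ⟨h0, h0'⟩ | ⟨h0, h0'⟩ <;>
  rcases max_cases (t + 2 / 3 - y - 1 / 2) 0 with ⟨h1, h1'⟩ | ⟨h1, h1'⟩ <;>
  rcases max_cases (t + 2 / 3 - (1 - x - y) - 1 / 2) 0 with ⟨h2, h2'⟩ | ⟨h2, h2'⟩ <;>
  rw [h0, h1, h2] <;> nlinarith [sq_nonneg x, sq_nonneg y, sq_nonneg (x + y - 1), sq_nonneg (x - y), sq_nonneg (x + 2 * y - 1), sq_nonneg (2 * x + y - 1)]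

lemma ex_convex (a : E2) : ConvexOn ℝ Set.univ (ex a) := by
  have h1 : ConvexOn ℝ Set.univ (fun x : E2 => ‖x - a‖ ^ 2) := by
    have := (convexOn_univ_norm (E := E2)).translate_left (-a)
    simp only [Set.preimage_univ] at this
    have h := this.pow (fun x _ => norm_nonneg _) 2
    have e : (fun x : E2 => ‖x - a‖ ^ 2) = ((fun x : E2 => ‖x‖) ∘ fun z => z + -a) ^ 2 := by
      funext x; simp [sub_eq_add_neg]
    rw [e]; exact h
  exact (h1.add_const (-(1 / 2))).sup (convexOn_const 0 convex_univ)

lemma Smap_rep (i : Fin 3) (x : E2) : Smap i x = ∑ j, lam j x • Smap i (V j) := by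
  simp only [Smap_eq, smul_add, Finset.sum_add_distrib, ← Finset.sum_smul, lam_sum, one_smul]
  congr 1
  conv_lhs => rw [← lam_rep x]
  rw [Finset.smul_sum]
  exact Finset.sum_congr rfl fun j _ => smul_comm _ _ _

lemma ex_interp (a : E2) (i : Fin 3) {x : E2} (hx : x ∈ T0) :
    ex a (Smap i x) ≤ ∑ j, lam j x * ex a (Smap i (V j)) := by
  rw [Smap_rep i x]
  exact (ex_convex a).map_sum_le (fun j _ => hx j) (lam_sum x) (fun _ _ => trivial)

lemma sub_vert (a : E2) (i j : Fin 3) (hij : i ≠ j) : ‖Smap i (V j) - a‖ ^ 2 =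
    2 / 3 * ‖V i - a‖ ^ 2 + 1 / 3 * ‖V j - a‖ ^ 2 - 2 / 9 := by
  rw [vert_nsq, vert_nsq, nsq_lam, nsq_lam]
  have ha := lam_sum a
  simp only [Fin.sum_univ_three, lam_Smap, lam_cen, lam_V] at *
  fin_cases i <;> fin_cases j <;> simp at * <;> grind

lemma Smap_fix (i : Fin 3) : Smap i (V i) = V i := by rw [Smap_eq]; module

lemma ex_sub_le (a : E2) (i j : Fin 3) :
    ex a (Smap i (V j)) ≤ 2 / 3 * ex a (V i) + 1 / 3 * ex a (V j) := by
  by_cases hij : i = j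
  · subst hij; rw [Smap_fix]; linarith
  · have := sub_vert a i j hij
    unfold ex
    rw [this]
    apply max_le
    · linarith [le_max_left (‖V i - a‖ ^ 2 - 1 / 2) 0, le_max_left (‖V j - a‖ ^ 2 - 1 / 2) 0]
    · linarith [le_max_right (‖V i - a‖ ^ 2 - 1 / 2) 0, le_max_right (‖V j - a‖ ^ 2 - 1 / 2) 0]

lemma ex_sub_lt (a : E2) (i j : Fin 3) (hij : i ≠ j) (h : 0 < ex a (V i)) :
    ex a (Smap i (V j)) < 2 / 3 * ex a (V i) + 1 / 3 * ex a (V j) := by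
  have := sub_vert a i j hij
  unfold ex at *
  rw [this]
  apply max_lt
  · linarith [le_max_left (‖V i - a‖ ^ 2 - 1 / 2) 0, le_max_left (‖V j - a‖ ^ 2 - 1 / 2) 0]
  · linarith [le_max_right (‖V j - a‖ ^ 2 - 1 / 2) 0]

/-- level-one average of the excess is smaller than the squared distance to the centroid -/
lemma ex_level_one (a : E2) (hac : a ≠ cen) :
    1 / 9 * ∑ i, ∑ j, ex a (Smap i (V j)) < ‖a - cen‖ ^ 2 := by
  have hpos : 0 < ‖a - cen‖ ^ 2 := by
    have := norm_pos_iff.2 (sub_ne_zero.2 hac); positivity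
  have hv := ex_vert a
  have hle := fun i j => ex_sub_le a i j
  have hlt := fun i j => ex_sub_lt a i j
  have hn := fun i => ex_nonneg a (V i)
  by_cases h : ∃ i, 0 < ex a (V i)
  · obtain ⟨i, hi⟩ := h
    refine lt_of_lt_of_le ?_ hv
    have : ∑ i, ∑ j, ex a (Smap i (V j)) < ∑ i, ∑ j, (2 / 3 * ex a (V i) + 1 / 3 * ex a (V j)) := by
      refine Finset.sum_lt_sum (fun i _ => Finset.sum_le_sum fun j _ => hle i j) ⟨i, by simp, ?_⟩
      refine Finset.sum_lt_sum (fun j _ => hle i j) ⟨i + 1, by simp, hlt i (i+1) ?_ hi⟩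
      fin_cases i <;> decide
    simp only [Fin.sum_univ_three] at *
    linarith
  · push Not at h
    have h0 : ∀ i, ex a (V i) = 0 := fun i => le_antisymm (h i) (hn i)
    simp only [h0] at hle
    have : ∑ i, ∑ j, ex a (Smap i (V j)) ≤ ∑ i : Fin 3, ∑ j : Fin 3, (2 / 3 * 0 + 1 / 3 * 0 : ℝ) :=
      Finset.sum_le_sum fun i _ => Finset.sum_le_sum fun j _ => hle i j
    simp at this
    linarith

/-! ### Self-similar measure -/

/-- The invariance hypothesis. -/
def SelfSim (P : Measure E2) : Prop :=
  P = (3 : ℝ≥0∞)⁻¹ • (P.map S1 + P.map S2 + P.map S3)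

section meas
variable {P : Measure E2} [IsProbabilityMeasure P]
set_option linter.unusedSectionVars false

lemma lint_inv (hP : SelfSim P) {g : E2 → ℝ≥0∞} (hg : Measurable g) :
    ∫⁻ x, g x ∂P = (3 : ℝ≥0∞)⁻¹ * ∑ i, ∫⁻ x, g (Smap i x) ∂P := by
  have e : P = (3 : ℝ≥0∞)⁻¹ • (P.map (Smap 0) + P.map (Smap 1) + P.map (Smap 2)) := hP
  conv_lhs => rw [e]
  rw [lintegral_smul_measure, lintegral_add_measure, lintegral_add_measure,
    lintegral_map hg (Smap_cont 0).measurable, lintegral_map hg (Smap_cont 1).measurable,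
    lintegral_map hg (Smap_cont 2).measurable, Fin.sum_univ_three, smul_eq_mul]

lemma supp_step (hP : SelfSim P) (i : Fin 3) (r : ℝ) :
    P {x | lam i x < -r} ≤ P {x | lam i x < -(3 * r)} := by
  have hm : ∀ r : ℝ, MeasurableSet {x | lam i x < r} := fun r =>
    measurableSet_lt (lam_cont i).measurable measurable_const
  rw [← lintegral_indicator_one (hm _), lint_inv hP (measurable_one.indicator (hm _))]
  have : ∀ j, ∫⁻ x, ({x | lam i x < -r} : Set E2).indicator 1 (Smap j x) ∂P
      ≤ P {x | lam i x < -(3 * r)} := by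
    intro j
    rw [← lintegral_indicator_one (hm _)]
    refine lintegral_mono fun x => ?_
    by_cases hx : lam i x < -(3 * r)
    · rw [Set.indicator_of_mem (s := {x | lam i x < -(3 * r)}) hx]
      exact Set.indicator_le_self _ _ _
    · have : Smap j x ∉ {x | lam i x < -r} := by
        simp only [Set.mem_ofPred_eq, lam_Smap, not_lt] at hx ⊢
        split_ifs <;> linarith
      rw [Set.indicator_of_notMem this]; exact zero_le
  calc _ ≤ (3 : ℝ≥0∞)⁻¹ * ∑ j : Fin 3, P {x | lam i x < -(3 * r)} := by
        gcongr with j; exact this j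
    _ = _ := by
        simp only [Finset.sum_const, Finset.card_univ, Fintype.card_fin, nsmul_eq_mul]
        rw [← mul_assoc]; push_cast
        rw [ENNReal.inv_mul_cancel (by norm_num) (by norm_num), one_mul]

lemma supp_zero (hP : SelfSim P) (i : Fin 3) {r : ℝ} (hr : 0 < r) :
    P {x | lam i x < -r} = 0 := by
  have hm : ∀ r : ℝ, MeasurableSet {x | lam i x < r} := fun r =>
    measurableSet_lt (lam_cont i).measurable measurable_const
  have h1 : ∀ k : ℕ, P {x | lam i x < -r} ≤ P {x | lam i x < -(3 ^ k * r)} := by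
    intro k
    induction k with
    | zero => simp
    | succ k ih =>
      refine ih.trans ((supp_step hP i _).trans (le_of_eq ?_))
      congr 2; ext x; rw [pow_succ]; ring_nf
  have ht : Filter.Tendsto (fun k : ℕ => P {x | lam i x < -(3 ^ k * r)}) Filter.atTop
      (nhds (P (⋂ k : ℕ, {x | lam i x < -(3 ^ k * r)}))) := by
    refine tendsto_measure_iInter_atTop (fun k => (hm _).nullMeasurableSet) ?_ ⟨0, by simp⟩
    intro a b hab x hx
    simp only [Set.mem_ofPred_eq] at *
    have : (3 : ℝ) ^ a ≤ 3 ^ b := pow_le_pow_right₀ (by norm_num) hab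
    nlinarith
  have he : (⋂ k : ℕ, {x | lam i x < -(3 ^ k * r)}) = ∅ := by
    ext x
    simp only [Set.mem_iInter, Set.mem_ofPred_eq, Set.mem_empty_iff_false, iff_false, not_forall,
      not_lt]
    obtain ⟨k, hk⟩ := pow_unbounded_of_one_lt (-lam i x / r) (by norm_num : (1 : ℝ) < 3)
    refine ⟨k, ?_⟩
    rw [div_lt_iff₀ hr] at hk
    linarith
  rw [he, measure_empty] at ht
  exact le_antisymm (ge_of_tendsto' ht h1) zero_le

lemma supp_T0 (hP : SelfSim P) : ∀ᵐ x ∂P, x ∈ T0 := by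
  refine ae_all_iff.2 fun i => ?_
  have h : ∀ n : ℕ, ∀ᵐ x ∂P, ¬ lam i x < -(1 / (n + 1 : ℝ)) := fun n => by
    have := supp_zero hP i (r := 1 / (n + 1 : ℝ)) (by positivity)
    rw [ae_iff]; simpa using this
  filter_upwards [ae_all_iff.2 h] with x hx
  by_contra hc
  push Not at hc
  obtain ⟨n, hn⟩ := exists_nat_one_div_lt (show 0 < -lam i x by linarith)
  exact hx n (by linarith)

lemma T0_null (hP : SelfSim P) : P T0ᶜ = 0 := supp_T0 hP

lemma integ (hP : SelfSim P) {g : E2 → ℝ} (hg : Continuous g) : Integrable g P := by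
  have h := hg.continuousOn.integrableOn_compact (μ := P) T0_compact
  rwa [IntegrableOn, Measure.restrict_eq_self_of_ae_mem (supp_T0 hP)] at h

lemma int_inv (hP : SelfSim P) {g : E2 → ℝ} (hg : Continuous g) :
    ∫ x, g x ∂P = 1 / 3 * ∑ i, ∫ x, g (Smap i x) ∂P := by
  have hi : ∀ i, Integrable g (P.map (Smap i)) := fun i =>
    (integrable_map_measure hg.aestronglyMeasurable (Smap_cont i).aemeasurable).2
      (integ hP (hg.comp (Smap_cont i)))
  have hm : ∀ i, ∫ x, g x ∂(P.map (Smap i)) = ∫ x, g (Smap i x) ∂P := fun i =>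
    integral_map (Smap_cont i).aemeasurable hg.aestronglyMeasurable
  have e : P = (3 : ℝ≥0∞)⁻¹ • (P.map (Smap 0) + P.map (Smap 1) + P.map (Smap 2)) := hP
  conv_lhs => rw [e]
  rw [integral_smul_measure, integral_add_measure ((hi 0).add_measure (hi 1)) (hi 2),
    integral_add_measure (hi 0) (hi 1), hm, hm, hm, Fin.sum_univ_three]
  simp

/-- first moments -/
lemma int_lam (hP : SelfSim P) (i : Fin 3) : ∫ x, lam i x ∂P = 1 / 3 := by
  have h := int_inv hP (lam_cont i)
  have h2 : ∀ j, ∫ x, lam i (Smap j x) ∂P = (∫ x, lam i x ∂P) / 3 + if i = j then 2 / 3 else 0 := by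
    intro j
    simp only [lam_Smap]
    rw [integral_add ((integ hP (lam_cont i)).div_const 3) (integrable_const _), integral_div]
    simp
  simp only [h2, Finset.sum_add_distrib, Finset.sum_ite_eq, Finset.mem_univ, if_true] at h
  simp at h
  linarith

/-- second moment about the centroid -/
lemma int_cen (hP : SelfSim P) : ∫ x, ‖x - cen‖ ^ 2 ∂P = 1 / 6 := by
  have hc : Continuous fun x : E2 => ‖x - cen‖ ^ 2 := by fun_prop
  have h := int_inv hP hc
  have e : ∀ j x, ‖Smap j x - cen‖ ^ 2 = ‖x - cen‖ ^ 2 / 9 + 2 / 9 * lam j x + 2 / 27 := by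
    intro j x
    have hs := lam_sum x
    rw [nsq_lam, nsq_lam]
    simp only [lam_Smap, lam_cen, Fin.sum_univ_three] at *
    fin_cases j <;> simp <;> grind
  have h2 : ∀ j, ∫ x, ‖Smap j x - cen‖ ^ 2 ∂P = (∫ x, ‖x - cen‖ ^ 2 ∂P) / 9 + 4 / 27 := by
    intro j
    simp only [e]
    have i1 := (integ hP hc).div_const 9
    have i2 := (integ hP (lam_cont j)).const_mul (2 / 9)
    have i3 : Integrable (fun x => ‖x - cen‖ ^ 2 / 9 + 2 / 9 * lam j x) P := i1.add i2
    rw [integral_add i3 (integrable_const _), integral_add i1 i2, integral_div,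
      integral_const_mul, int_lam hP]
    simp; norm_num
    ring
  simp only [h2] at h
  simp at h
  linarith

lemma int_sq (hP : SelfSim P) (a : E2) : ∫ x, ‖x - a‖ ^ 2 ∂P = 1 / 6 + ‖a - cen‖ ^ 2 := by
  have hc : Continuous fun x : E2 => ‖x - cen‖ ^ 2 := by fun_prop
  have e : ∀ x, ‖x - a‖ ^ 2 = ‖x - cen‖ ^ 2 +
      (∑ i, -(lam i a - 1 / 3) * (lam i x) + ‖a - cen‖ ^ 2) := by
    intro x
    have hs := lam_sum x
    have ha := lam_sum a
    rw [nsq_lam, nsq_lam, nsq_lam]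
    simp only [lam_cen, Fin.sum_univ_three] at *
    grind
  simp only [e]
  have i1 : ∀ i ∈ Finset.univ, Integrable (fun x => -(lam i a - 1 / 3) * (lam i x)) P := fun i _ =>
    (integ hP (lam_cont i)).const_mul _
  have ha := lam_sum a
  have i3 : Integrable (fun x => ∑ i, -(lam i a - 1 / 3) * lam i x + ‖a - cen‖ ^ 2) P :=
    (integrable_finsetSum _ i1).add (integrable_const _)
  rw [integral_add (integ hP hc) i3,
    integral_add (integrable_finsetSum _ i1) (integrable_const _), integral_finsetSum _ i1,
    int_cen hP]
  simp only [integral_const_mul, int_lam hP, Fin.sum_univ_three] at *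
  simp
  linarith

/-- the truncated functional -/
def phi (a x : E2) : ℝ := max (1 / 2 - ‖x - a‖ ^ 2) 0

lemma phi_cont (a : E2) : Continuous (phi a) := by unfold phi; fun_prop

def DD (P : Measure E2) (a : E2) : ℝ := ∫ x, phi a x ∂P

lemma DD_nonneg (a : E2) : 0 ≤ DD P a := integral_nonneg fun _ => le_max_right _ _

lemma int_ex_lt (hP : SelfSim P) {a : E2} (ha : a ≠ cen) : ∫ x, ex a x ∂P < ‖a - cen‖ ^ 2 := by
  refine lt_of_le_of_lt ?_ (ex_level_one a ha)
  rw [int_inv hP (ex_cont a)]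
  have h : ∀ i, ∫ x, ex a (Smap i x) ∂P ≤ 1 / 3 * ∑ j, ex a (Smap i (V j)) := by
    intro i
    have i1 : ∀ j ∈ Finset.univ, Integrable (fun x => lam j x * ex a (Smap i (V j))) P :=
      fun j _ => (integ hP (lam_cont j)).mul_const _
    calc _ ≤ ∫ x, ∑ j, lam j x * ex a (Smap i (V j)) ∂P := by
          refine integral_mono_ae (integ hP ((ex_cont a).comp (Smap_cont i)))
            (integrable_finsetSum _ i1) ?_
          filter_upwards [supp_T0 hP] with x hx using ex_interp a i hx
      _ = _ := by
          rw [integral_finsetSum _ i1]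
          simp only [integral_mul_const, int_lam hP, Finset.mul_sum]
  calc _ ≤ 1 / 3 * ∑ i, (1 / 3 * ∑ j, ex a (Smap i (V j))) := by gcongr with i; exact h i
    _ = _ := by rw [← Finset.mul_sum]; ring

lemma DD_lt (hP : SelfSim P) {a : E2} (ha : a ≠ cen) : DD P a < 1 / 3 := by
  have e : ∀ x, phi a x = 1 / 2 - ‖x - a‖ ^ 2 + ex a x := by
    intro x
    unfold phi ex
    rcases max_cases (1 / 2 - ‖x - a‖ ^ 2) 0 with ⟨h0, h0'⟩ | ⟨h0, h0'⟩ <;>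
    rcases max_cases (‖x - a‖ ^ 2 - 1 / 2) 0 with ⟨h1, h1'⟩ | ⟨h1, h1'⟩ <;> linarith
  have hc : Continuous fun x : E2 => ‖x - a‖ ^ 2 := by fun_prop
  have := int_ex_lt hP ha
  unfold DD
  simp only [e]
  have i3 : Integrable (fun x => 1 / 2 - ‖x - a‖ ^ 2) P := (integrable_const _).sub (integ hP hc)
  rw [integral_add i3 (integ hP (ex_cont a)),
    integral_sub (integrable_const _) (integ hP hc), int_sq hP]
  simp
  linarith

lemma DD_cen (hP : SelfSim P) : DD P cen ≤ 1 / 3 := by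
  have hc : Continuous fun x : E2 => ‖x - cen‖ ^ 2 := by fun_prop
  have e : ∀ x ∈ T0, phi cen x = 1 / 2 - ‖x - cen‖ ^ 2 := by
    intro x hx
    unfold phi
    apply max_eq_left
    have hs := lam_sum x
    have h0 := hx 0
    have h1 := hx 1
    have h2 := hx 2
    rw [nsq_lam]
    simp only [lam_cen, Fin.sum_univ_three] at *
    nlinarith [mul_nonneg h0 h1, mul_nonneg h0 h2, mul_nonneg h1 h2]
  have : DD P cen = ∫ x, (1 / 2 - ‖x - cen‖ ^ 2) ∂P := by
    apply integral_congr_ae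
    filter_upwards [supp_T0 hP] with x hx using e x hx
  rw [this, integral_sub (integrable_const _) (integ hP hc), int_cen hP]
  simp; norm_num

lemma DD_le (hP : SelfSim P) (a : E2) : DD P a ≤ 1 / 3 := by
  by_cases h : a = cen
  · rw [h]; exact DD_cen hP
  · exact (DD_lt hP h).le

/-- a point in the triangle where the integrand is at least its mean -/
lemma exists_pt (hP : SelfSim P) {g : E2 → ℝ} (hg : Continuous g) :
    ∃ x ∈ T0, ∫ y, g y ∂P ≤ g x := by
  obtain ⟨x, hx, h⟩ := exists_notMem_null_integral_le (integ hP hg) (T0_null hP)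
  exact ⟨x, not_not.1 hx, h⟩

lemma DD_hit (hP : SelfSim P) {a : E2} (h : 0 < DD P a) : ∃ x ∈ T0, ‖x - a‖ ^ 2 < 1 / 2 := by
  obtain ⟨x, hx, h1⟩ := exists_pt hP (phi_cont a)
  refine ⟨x, hx, ?_⟩
  have := h.trans_le h1
  unfold phi at this
  rcases lt_max_iff.1 this with h | h <;> linarith

/-- estimate when two subcells are involved -/
lemma two_sub {A B : ℝ} {a y z : E2} {i j : Fin 3} (hij : i ≠ j) (hy : y ∈ T0) (hz : z ∈ T0)
    (hA : A ≤ phi a (Smap i y)) (hB : B ≤ phi a (Smap j z)) (hpos : 0 < A + B) :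
    ∃ m ∈ T0, 1 / 3 * (A + B) < 2 / 3 * (1 / 2 - ‖m - a‖ ^ 2) := by
  have hsep := sub_sep hij hy hz
  have hy' := Smap_T0 i hy
  have hz' := Smap_T0 j hz
  generalize Smap i y = u at *
  generalize Smap j z = w at *
  have hmid : ‖(1 / 2 : ℝ) • (u + w) - a‖ ^ 2 =
      1 / 2 * ‖u - a‖ ^ 2 + 1 / 2 * ‖w - a‖ ^ 2 - 1 / 4 * ‖u - w‖ ^ 2 := by
    simp only [nsq]; simp; ring
  unfold phi at hA hB
  rcases max_cases (1 / 2 - ‖u - a‖ ^ 2) 0 with ⟨h0, h0'⟩ | ⟨h0, h0'⟩ <;>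
  rcases max_cases (1 / 2 - ‖w - a‖ ^ 2) 0 with ⟨h1, h1'⟩ | ⟨h1, h1'⟩ <;> rw [h0] at hA <;>
  rw [h1] at hB
  · refine ⟨_, T0_mid hy' hz', ?_⟩
    rw [hmid]; nlinarith
  · exact ⟨u, hy', by linarith⟩
  · exact ⟨w, hz', by linarith⟩
  · linarith

lemma DD_two (hP : SelfSim P) {a z : E2} (hz : ‖z - a‖ ^ 2 < 1 / 2)
    (hfar : ∀ y ∈ T0, 1 ≤ ‖z - y‖) (hpos : 0 < DD P a) :
    ∃ m ∈ T0, DD P a < 2 / 3 * (1 / 2 - ‖m - a‖ ^ 2) := by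
  have hnf : ∃ i, ∀ x ∈ T0, 1 / 2 ≤ ‖Smap i x - a‖ ^ 2 := by
    by_contra hc
    push Not at hc
    exact full_hit hz hfar hc
  obtain ⟨i, hi⟩ := hnf
  have hD : DD P a = 1 / 3 * ∑ i, ∫ x, phi a (Smap i x) ∂P := int_inv hP (phi_cont a)
  choose y hyT hy using fun i : Fin 3 => exists_pt hP ((phi_cont a).comp (Smap_cont i))
  simp only [Function.comp_apply] at hy
  have h0 : ∫ x, phi a (Smap i x) ∂P ≤ 0 := by
    refine (hy i).trans ?_
    unfold phi
    rw [max_eq_right]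
    linarith [hi _ (hyT i)]
  have main : ∀ j k : Fin 3, j ≠ k →
      DD P a ≤ 1 / 3 * (∫ x, phi a (Smap j x) ∂P + ∫ x, phi a (Smap k x) ∂P) →
      ∃ m ∈ T0, DD P a < 2 / 3 * (1 / 2 - ‖m - a‖ ^ 2) := by
    intro j k hjk hle
    obtain ⟨m, hm, h⟩ := two_sub hjk (hyT j) (hyT k) (hy j) (hy k) (by linarith)
    exact ⟨m, hm, hle.trans_lt h⟩
  rw [Fin.sum_univ_three] at hD
  fin_cases i
  · exact main 1 2 (by decide) (by simp at h0; linarith)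
  · exact main 0 2 (by decide) (by simp at h0; linarith)
  · exact main 0 1 (by decide) (by simp at h0; linarith)

lemma sep_sum {ι : Type*} (K : Finset ι) (u : ι → E2)
    (h : ∀ i ∈ K, ∀ j ∈ K, i ≠ j → 1 ≤ ‖u i - u j‖) (hK : K.Nonempty) :
    ∑ i ∈ K, (1 / 2 - ‖u i‖ ^ 2) ≤ 1 / 2 := by
  classical
  have hk : (0 : ℝ) < K.card := by exact_mod_cast hK.card_pos
  have e1 : ∑ i ∈ K, ∑ j ∈ K, ‖u i - u j‖ ^ 2 =
      2 * K.card * ∑ i ∈ K, ‖u i‖ ^ 2 - 2 * ‖∑ i ∈ K, u i‖ ^ 2 := by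
    have : ∀ i j, ‖u i - u j‖ ^ 2 = ‖u i‖ ^ 2 - 2 * inner ℝ (u i) (u j) + ‖u j‖ ^ 2 :=
      fun i j => norm_sub_sq_real _ _
    simp only [this, Finset.sum_add_distrib, Finset.sum_sub_distrib, Finset.sum_const,
      nsmul_eq_mul, ← Finset.mul_sum]
    rw [← real_inner_self_eq_norm_sq (∑ i ∈ K, u i), sum_inner]
    simp only [inner_sum]
    ring
  have e2 : (K.card : ℝ) * (K.card - 1) ≤ ∑ i ∈ K, ∑ j ∈ K, ‖u i - u j‖ ^ 2 := by
    have : ∀ i ∈ K, (K.card : ℝ) - 1 ≤ ∑ j ∈ K, ‖u i - u j‖ ^ 2 := by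
      intro i hi
      rw [← Finset.add_sum_erase _ _ hi]
      have h1 : ∑ j ∈ K.erase i, (1 : ℝ) ≤ ∑ j ∈ K.erase i, ‖u i - u j‖ ^ 2 := by
        refine Finset.sum_le_sum fun j hj => ?_
        rw [Finset.mem_erase] at hj
        have := h i hi j hj.2 hj.1.symm
        nlinarith
      rw [Finset.sum_const, Finset.card_erase_of_mem hi, nsmul_eq_mul,
        Nat.cast_sub hK.card_pos] at h1
      simp at h1 ⊢
      linarith
    have h2 := Finset.sum_le_sum this
    rw [Finset.sum_const, nsmul_eq_mul] at h2
    exact h2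
  rw [Finset.sum_sub_distrib, Finset.sum_const, nsmul_eq_mul]
  have : 0 ≤ ‖∑ i ∈ K, u i‖ ^ 2 := by positivity
  have h3 : (K.card : ℝ) * (K.card - 1) ≤ K.card * (2 * ∑ i ∈ K, ‖u i‖ ^ 2) := by linarith
  have h4 := le_of_mul_le_mul_left h3 hk
  linarith

/-- The main single-centre estimate. -/
lemma main_est (hP : SelfSim P) {ι : Type*} [Fintype ι] (B : ι → E2)
    (hB : ∀ i j, i ≠ j → ∀ x ∈ T0, ∀ y ∈ T0, 1 ≤ ‖(x + B i) - (y + B j)‖) (a : E2) :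
    ∑ i, DD P (a - B i) < 1 / 3 ∨ (∑ i, DD P (a - B i) ≤ 1 / 3 ∧ ∃ i, a - B i = cen) := by
  classical
  set K : Finset ι := Finset.univ.filter fun i => 0 < DD P (a - B i) with hK
  have hsum : ∑ i, DD P (a - B i) = ∑ i ∈ K, DD P (a - B i) := by
    symm
    apply Finset.sum_filter_of_ne
    intro i _ hi
    exact lt_of_le_of_ne (DD_nonneg _) (Ne.symm hi)
  have hmem : ∀ i, i ∈ K ↔ 0 < DD P (a - B i) := by simp [hK]
  rw [hsum]
  rcases K.eq_empty_or_nonempty with h0 | hne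
  · left; rw [h0]; simp
  · rcases Nat.lt_or_ge 1 K.card with h2 | h1
    · left
      have hm : ∀ i ∈ K, ∃ m ∈ T0, DD P (a - B i) < 2 / 3 * (1 / 2 - ‖m - (a - B i)‖ ^ 2) := by
        intro i hi
        obtain ⟨j, hj, hji⟩ := Finset.exists_mem_ne h2 i
        obtain ⟨x, hx, hxa⟩ := DD_hit hP ((hmem j).1 hj)
        refine DD_two hP (z := x + B j - B i) ?_ ?_ ((hmem i).1 hi)
        · convert hxa using 3; abel
        · intro y hy
          have := hB j i hji x hx y hy
          convert this using 2; abel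
      choose! m hmT hmD using hm
      calc _ < ∑ i ∈ K, 2 / 3 * (1 / 2 - ‖m i - (a - B i)‖ ^ 2) := Finset.sum_lt_sum_of_nonempty hne hmD
        _ = 2 / 3 * ∑ i ∈ K, (1 / 2 - ‖m i - (a - B i)‖ ^ 2) := by rw [Finset.mul_sum]
        _ ≤ 2 / 3 * (1 / 2) := by
          gcongr
          refine sep_sum K (fun i => m i - (a - B i)) ?_ hne
          intro i hi j hj hij
          have := hB i j hij _ (hmT i hi) _ (hmT j hj)
          convert this using 2; abel
        _ = 1 / 3 := by norm_num
    · obtain ⟨i, hi⟩ := Finset.card_eq_one.1 (le_antisymm h1 hne.card_pos)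
      rw [hi, Finset.sum_singleton]
      by_cases hc : a - B i = cen
      · right; exact ⟨DD_le hP _, i, hc⟩
      · left; exact DD_lt hP hc

end meas

/-! ### Words -/

lemma Sword_zero (ω : Fin 0 → Fin 3) (x : E2) : Sword ω x = x := by simp [Sword]

lemma Sword_cons {k : ℕ} (i : Fin 3) (ω : Fin k → Fin 3) (x : E2) :
    Sword (Fin.cons i ω : Fin (k + 1) → Fin 3) x = Smap i (Sword ω x) := by
  simp [Sword, List.ofFn_succ]

lemma sum_words {M : Type*} [AddCommMonoid M] {k : ℕ} (f : (Fin (k + 1) → Fin 3) → M) :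
    ∑ ω, f ω = ∑ i : Fin 3, ∑ ω : Fin k → Fin 3, f (Fin.cons i ω) := by
  rw [← Fintype.sum_prod_type']
  exact (Fintype.sum_equiv (Fin.consEquiv fun _ : Fin (k + 1) => Fin 3) _ _ fun x => rfl).symm

lemma Sword_aff {k : ℕ} (ω : Fin k → Fin 3) (x : E2) :
    Sword ω x = ((1 / 3 : ℝ) ^ k) • x + Sword ω 0 := by
  induction k with
  | zero => simp [Sword_zero]
  | succ k ih =>
    rw [← Fin.cons_self_tail ω, Sword_cons, Sword_cons, ih, Smap_eq, Smap_eq, pow_succ]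
    module

lemma Sword_cont {k : ℕ} (ω : Fin k → Fin 3) : Continuous (Sword ω) := by
  have : Sword ω = fun x => ((1 / 3 : ℝ) ^ k) • x + Sword ω 0 := funext (Sword_aff ω)
  rw [this]; fun_prop

lemma Sword_T0 {k : ℕ} (ω : Fin k → Fin 3) {x : E2} (hx : x ∈ T0) : Sword ω x ∈ T0 := by
  induction k with
  | zero => simpa [Sword_zero] using hx
  | succ k ih =>
    rw [← Fin.cons_self_tail ω, Sword_cons]
    exact Smap_T0 _ (ih _)

lemma Sword_sep {k : ℕ} (ω τ : Fin k → Fin 3) (h : ω ≠ τ) {x y : E2} (hx : x ∈ T0)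
    (hy : y ∈ T0) : (1 / 3 : ℝ) ^ k ≤ ‖Sword ω x - Sword τ y‖ := by
  induction k with
  | zero => exact absurd (Subsingleton.elim _ _) h
  | succ k ih =>
    rw [← Fin.cons_self_tail ω, ← Fin.cons_self_tail τ, Sword_cons, Sword_cons]
    by_cases h0 : ω 0 = τ 0
    · have ht : Fin.tail ω ≠ Fin.tail τ := by
        intro hc; apply h
        rw [← Fin.cons_self_tail ω, ← Fin.cons_self_tail τ, h0, hc]
      have := ih _ _ ht
      have e : Smap (ω 0) (Sword (Fin.tail ω) x) - Smap (τ 0) (Sword (Fin.tail τ) y)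
          = (1 / 3 : ℝ) • (Sword (Fin.tail ω) x - Sword (Fin.tail τ) y) := by
        rw [h0, Smap_eq, Smap_eq]; module
      rw [e, norm_smul, pow_succ]
      norm_num at this ⊢
      linarith
    · refine le_trans ?_ (sub_sep h0 (Sword_T0 _ hx) (Sword_T0 _ hy))
      rw [pow_succ]
      have : (1 / 3 : ℝ) ^ k ≤ 1 := pow_le_one₀ (by norm_num) (by norm_num)
      linarith

section fin
variable {P : Measure E2} [IsProbabilityMeasure P]
set_option linter.unusedSectionVars false

lemma int_word (hP : SelfSim P) (k : ℕ) {g : E2 → ℝ} (hg : Continuous g) :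
    ∫ x, g x ∂P = (1 / 3) ^ k * ∑ ω : Fin k → Fin 3, ∫ x, g (Sword ω x) ∂P := by
  induction k generalizing g with
  | zero => simp [Sword_zero]
  | succ k ih =>
    rw [int_inv hP hg, sum_words]
    simp only [Sword_cons]
    have : ∀ i, ∫ x, g (Smap i x) ∂P =
        (1 / 3) ^ k * ∑ ω : Fin k → Fin 3, ∫ x, g (Smap i (Sword ω x)) ∂P :=
      fun i => ih (hg.comp (Smap_cont i))
    simp only [this, ← Finset.mul_sum]
    ring

lemma lint_word (hP : SelfSim P) (k : ℕ) {g : E2 → ℝ≥0∞} (hg : Measurable g) :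
    ∫⁻ x, g x ∂P = (3 : ℝ≥0∞)⁻¹ ^ k * ∑ ω : Fin k → Fin 3, ∫⁻ x, g (Sword ω x) ∂P := by
  induction k generalizing g with
  | zero => simp [Sword_zero]
  | succ k ih =>
    rw [lint_inv hP hg, sum_words]
    simp only [Sword_cons]
    have : ∀ i, ∫⁻ x, g (Smap i x) ∂P =
        (3 : ℝ≥0∞)⁻¹ ^ k * ∑ ω : Fin k → Fin 3, ∫⁻ x, g (Smap i (Sword ω x)) ∂P :=
      fun i => ih (hg.comp (Smap_cont i).measurable)
    simp only [this, ← Finset.mul_sum]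
    ring

/-- truncated functional at level `k` -/
def psi (k : ℕ) (a x : E2) : ℝ := max ((1 / 9) ^ k / 2 - ‖x - a‖ ^ 2) 0

lemma psi_cont (k : ℕ) (a : E2) : Continuous (psi k a) := by unfold psi; fun_prop

lemma psi_scale (k : ℕ) (a x : E2) (ω : Fin k → Fin 3) : psi k a (Sword ω x) =
    (1 / 9) ^ k * phi ((3 : ℝ) ^ k • a - (3 : ℝ) ^ k • Sword ω 0) x := by
  have h3 : (1 / 3 : ℝ) ^ k * 3 ^ k = 1 := by rw [← mul_pow]; norm_num
  have e : Sword ω x - a =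
      (1 / 3 : ℝ) ^ k • (x - ((3 : ℝ) ^ k • a - (3 : ℝ) ^ k • Sword ω 0)) := by
    rw [Sword_aff, smul_sub, smul_sub, smul_smul, smul_smul, h3]; module
  have h9 : ((1 / 3 : ℝ) ^ k) ^ 2 = (1 / 9) ^ k := by rw [← pow_mul, mul_comm, pow_mul]; norm_num
  unfold psi phi
  rw [e, norm_smul, mul_pow, Real.norm_eq_abs, sq_abs, h9, mul_max_of_nonneg _ _ (by positivity)]
  congr 1 <;> ring

lemma psi_est (hP : SelfSim P) (k : ℕ) (a : E2) :
    ∫ x, psi k a x ∂P < (1 / 27) ^ k / 3 ∨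
    (∫ x, psi k a x ∂P ≤ (1 / 27) ^ k / 3 ∧ ∃ ω : Fin k → Fin 3, a = Sword ω cen) := by
  have h3 : (1 / 3 : ℝ) ^ k * 3 ^ k = 1 := by rw [← mul_pow]; norm_num
  have hpos : (0 : ℝ) < (1 / 27) ^ k := by positivity
  have e : ∫ x, psi k a x ∂P = (1 / 27) ^ k *
      ∑ ω : Fin k → Fin 3, DD P ((3 : ℝ) ^ k • a - (3 : ℝ) ^ k • Sword ω 0) := by
    rw [int_word hP k (psi_cont k a)]
    simp only [psi_scale, integral_const_mul, ← Finset.mul_sum, DD]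
    rw [← mul_assoc, ← mul_pow]; norm_num
  have hB : ∀ ω τ : Fin k → Fin 3, ω ≠ τ → ∀ x ∈ T0, ∀ y ∈ T0,
      1 ≤ ‖(x + (3 : ℝ) ^ k • Sword ω 0) - (y + (3 : ℝ) ^ k • Sword τ 0)‖ := by
    intro ω τ h x hx y hy
    have h1 := Sword_sep ω τ h hx hy
    have e2 : Sword ω x - Sword τ y = (1 / 3 : ℝ) ^ k •
        ((x + (3 : ℝ) ^ k • Sword ω 0) - (y + (3 : ℝ) ^ k • Sword τ 0)) := by
      rw [Sword_aff ω, Sword_aff τ, smul_sub, smul_add, smul_add, smul_smul, smul_smul, h3]; module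
    rw [e2, norm_smul, Real.norm_of_nonneg (by positivity)] at h1
    have hp : (0 : ℝ) < (1 / 3) ^ k := by positivity
    exact (le_mul_iff_one_le_right hp).1 h1
  rcases main_est hP _ hB ((3 : ℝ) ^ k • a) with h | ⟨h, ω, hω⟩
  · left; rw [e]; nlinarith
  · right
    refine ⟨by rw [e]; nlinarith, ω, ?_⟩
    rw [Sword_aff, ← hω, smul_sub, smul_smul, smul_smul, h3]; module

lemma err_lower (hP : SelfSim P) (k : ℕ) (β : Finset E2) :
    ENNReal.ofReal ((1 / 9) ^ k / 2 - ∑ a ∈ β, ∫ x, psi k a x ∂P) ≤ err P β := by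
  have hi : ∀ a ∈ β, Integrable (psi k a) P := fun a _ => integ hP (psi_cont k a)
  have hc : Continuous fun x => max ((1 / 9) ^ k / 2 - ∑ a ∈ β, psi k a x) 0 := by
    have := fun a => psi_cont k a
    fun_prop
  have e : (1 / 9) ^ k / 2 - ∑ a ∈ β, ∫ x, psi k a x ∂P =
      ∫ x, ((1 / 9) ^ k / 2 - ∑ a ∈ β, psi k a x) ∂P := by
    rw [integral_sub (integrable_const _) (integrable_finsetSum _ hi), integral_finsetSum _ hi]
    simp
  have h1 : ∫ x, ((1 / 9) ^ k / 2 - ∑ a ∈ β, psi k a x) ∂P ≤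
      ∫ x, max ((1 / 9) ^ k / 2 - ∑ a ∈ β, psi k a x) 0 ∂P :=
    integral_mono ((integrable_const _).sub (integrable_finsetSum _ hi)) (integ hP hc)
      fun x => le_max_left _ _
  rw [e]
  refine (ENNReal.ofReal_le_ofReal h1).trans ?_
  rw [ofReal_integral_eq_lintegral_ofReal (integ hP hc)
    (Filter.Eventually.of_forall fun x => le_max_right _ _)]
  unfold err
  refine lintegral_mono fun x => ?_
  refine le_iInf₂ fun a ha => ENNReal.ofReal_le_ofReal ?_
  refine max_le ?_ (by positivity)
  have h2 : psi k a x ≤ ∑ a ∈ β, psi k a x :=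
    Finset.single_le_sum (f := fun a => psi k a x) (fun _ _ => le_max_right _ _) ha
  have h3 : (1 / 9) ^ k / 2 - ‖x - a‖ ^ 2 ≤ psi k a x := le_max_left _ _
  linarith

lemma err_upper (hP : SelfSim P) (k : ℕ) :
    err P (Set.range fun ω : Fin k → Fin 3 => Sword ω cen) ≤ ENNReal.ofReal ((1 / 9) ^ k / 6) := by
  unfold err
  have hm : Measurable fun x : E2 => ⨅ a ∈ (Set.range fun ω : Fin k → Fin 3 => Sword ω cen),
      ENNReal.ofReal (‖x - a‖ ^ 2) := by
    refine Measurable.biInf _ (Set.countable_range _) fun a _ => ?_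
    have : Continuous fun x : E2 => ENNReal.ofReal (‖x - a‖ ^ 2) :=
      ENNReal.continuous_ofReal.comp (by fun_prop)
    exact this.measurable
  rw [lint_word hP k hm]
  have h : ∀ ω : Fin k → Fin 3, ∫⁻ x, (⨅ a ∈ (Set.range fun ω : Fin k → Fin 3 => Sword ω cen),
      ENNReal.ofReal (‖Sword ω x - a‖ ^ 2)) ∂P ≤ ENNReal.ofReal ((1 / 9) ^ k / 6) := by
    intro ω
    have h9 : ((1 / 3 : ℝ) ^ k) ^ 2 = (1 / 9) ^ k := by
      rw [← pow_mul, mul_comm, pow_mul]; norm_num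
    have e : ∀ x, ‖Sword ω x - Sword ω cen‖ ^ 2 = (1 / 9) ^ k * ‖x - cen‖ ^ 2 := by
      intro x
      have : Sword ω x - Sword ω cen = (1 / 3 : ℝ) ^ k • (x - cen) := by
        rw [Sword_aff ω x, Sword_aff ω cen]; module
      rw [this, norm_smul, mul_pow, Real.norm_eq_abs, sq_abs, h9]
    have hc : Continuous fun x : E2 => (1 / 9 : ℝ) ^ k * ‖x - cen‖ ^ 2 := by fun_prop
    calc _ ≤ ∫⁻ x, ENNReal.ofReal ((1 / 9) ^ k * ‖x - cen‖ ^ 2) ∂P := by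
          refine lintegral_mono fun x => ?_
          rw [← e]
          exact iInf₂_le (Sword ω cen) ⟨ω, rfl⟩
      _ = ENNReal.ofReal (∫ x, (1 / 9) ^ k * ‖x - cen‖ ^ 2 ∂P) := by
          rw [ofReal_integral_eq_lintegral_ofReal (integ hP hc)
            (Filter.Eventually.of_forall fun x => by positivity)]
      _ = _ := by rw [integral_const_mul, int_cen hP]; congr 1; ring
  calc _ ≤ (3 : ℝ≥0∞)⁻¹ ^ k * ∑ ω : Fin k → Fin 3, ENNReal.ofReal ((1 / 9) ^ k / 6) := by
        gcongr with ω; exact h ω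
    _ = _ := by
        simp only [Finset.sum_const, Finset.card_univ, Fintype.card_fun, Fintype.card_fin,
          nsmul_eq_mul]
        rw [← mul_assoc]; push_cast
        rw [← mul_pow, ENNReal.inv_mul_cancel (by norm_num) (by norm_num), one_pow, one_mul]

lemma pow_aux (k : ℕ) : (3 : ℝ) ^ k * ((1 / 27) ^ k / 3) = (1 / 9) ^ k / 3 := by
  rw [← mul_div_assoc, ← mul_pow]; norm_num

lemma sum_psi_le (hP : SelfSim P) (k : ℕ) (β : Finset E2) (hβ : β.card ≤ 3 ^ k) :
    ∑ a ∈ β, ∫ x, psi k a x ∂P ≤ (1 / 9) ^ k / 3 := by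
  have h1 : ∑ a ∈ β, ∫ x, psi k a x ∂P ≤ ∑ a ∈ β, ((1 / 27 : ℝ) ^ k / 3) := by
    refine Finset.sum_le_sum fun a _ => ?_
    rcases psi_est hP k a with h | ⟨h, -⟩
    · exact h.le
    · exact h
  rw [Finset.sum_const, nsmul_eq_mul] at h1
  have h2 : (β.card : ℝ) ≤ 3 ^ k := by exact_mod_cast hβ
  rw [← pow_aux]
  refine h1.trans ?_
  gcongr

lemma quant_lower (hP : SelfSim P) (k : ℕ) (β : Set E2) (hf : β.Finite) (hβ : β.ncard ≤ 3 ^ k) :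
    ENNReal.ofReal ((1 / 9) ^ k / 6) ≤ err P β := by
  lift β to Finset E2 using hf
  rw [Set.ncard_coe_finset] at hβ
  refine le_trans (ENNReal.ofReal_le_ofReal ?_) (err_lower hP k β)
  linarith [sum_psi_le hP k β hβ]

lemma range_card (k : ℕ) :
    (Set.range fun ω : Fin k → Fin 3 => Sword ω cen).ncard ≤ 3 ^ k := by
  rw [← Set.image_univ]
  refine (Set.ncard_image_le Set.finite_univ).trans ?_
  rw [Set.ncard_univ, Nat.card_eq_fintype_card]; simp

lemma quant_eq (hP : SelfSim P) (k : ℕ) : quantErr P (3 ^ k) = ENNReal.ofReal ((1 / 9) ^ k / 6) := by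
  refine le_antisymm ?_ (le_iInf₂ fun α hα => quant_lower hP k α hα.1 hα.2)
  exact (iInf₂_le _ ⟨Set.finite_range _, range_card k⟩).trans (err_upper hP k)

lemma unique_opt (hP : SelfSim P) (k : ℕ) (β : Set E2) (h : IsOptimal P (3 ^ k) β) :
    β = Set.range fun ω : Fin k → Fin 3 => Sword ω cen := by
  obtain ⟨hf, hc, he⟩ := h
  lift β to Finset E2 using hf
  rw [Set.ncard_coe_finset] at hc
  have hp : (0 : ℝ) < (1 / 27) ^ k / 3 := by positivity
  have hp9 : (0 : ℝ) < (1 / 9) ^ k / 6 := by positivity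
  have h1 := err_lower hP k β
  rw [he, quant_eq hP, ENNReal.ofReal_le_ofReal_iff hp9.le] at h1
  have h2 : (3 : ℝ) ^ k * ((1 / 27) ^ k / 3) ≤ ∑ a ∈ β, ∫ x, psi k a x ∂P := by
    rw [pow_aux]; linarith
  have hle : ∀ a ∈ β, ∫ x, psi k a x ∂P ≤ (1 / 27 : ℝ) ^ k / 3 := by
    intro a _
    rcases psi_est hP k a with h | ⟨h, -⟩
    · exact h.le
    · exact h
  have hcR : (β.card : ℝ) ≤ 3 ^ k := by exact_mod_cast hc
  have hsub : (β : Set E2) ⊆ Set.range fun ω : Fin k → Fin 3 => Sword ω cen := by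
    intro a ha
    rcases psi_est hP k a with h | ⟨-, ω, hω⟩
    · exfalso
      have := Finset.sum_lt_sum hle ⟨a, ha, h⟩
      rw [Finset.sum_const, nsmul_eq_mul] at this
      nlinarith
    · exact ⟨ω, hω.symm⟩
  refine Set.eq_of_subset_of_ncard_le hsub ?_ (Set.finite_range _)
  refine (range_card k).trans ?_
  rw [Set.ncard_coe_finset]
  have h3 := Finset.sum_le_sum hle
  rw [Finset.sum_const, nsmul_eq_mul] at h3
  have h4 := le_of_mul_le_mul_right (h2.trans h3) hp
  exact_mod_cast h4

end fin

/-- For every ℓ ≥ 1 and n = 3^ℓ, the set {S_ω(c) : ω ∈ {1,2,3}^ℓ}, c = (1/2, √3/6), is the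
unique optimal set of n-means for the R-measure P, and V_n(P) = (1/6)(1/9^ℓ). -/
theorem stmt_13 (P : Measure E2) [IsProbabilityMeasure P]
    (hP : P = (3 : ℝ≥0∞)⁻¹ • (P.map S1 + P.map S2 + P.map S3))
    (ℓ : ℕ) (hℓ : 1 ≤ ℓ) :
    IsOptimal P (3 ^ ℓ)
        (Set.range fun ω : Fin ℓ → Fin 3 => Sword ω (pt (1/2) (Real.sqrt 3 / 6)))
      ∧ (∀ β : Set E2, IsOptimal P (3 ^ ℓ) β →
          β = Set.range fun ω : Fin ℓ → Fin 3 => Sword ω (pt (1/2) (Real.sqrt 3 / 6)))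
      ∧ quantErr P (3 ^ ℓ) = (1 / 6 : ℝ≥0∞) * (1 / 9 ^ ℓ) := by
  have hS : SelfSim P := hP
  refine ⟨⟨Set.finite_range _, range_card ℓ, ?_⟩, fun β hβ => unique_opt hS ℓ β hβ, ?_⟩
  · exact le_antisymm ((err_upper hS ℓ).trans (quant_eq hS ℓ).ge)
      (iInf₂_le _ ⟨Set.finite_range _, range_card ℓ⟩)
  · rw [quant_eq hS, div_eq_mul_inv, mul_comm, ENNReal.ofReal_mul (by norm_num),
      ENNReal.ofReal_pow (by norm_num), ENNReal.ofReal_inv_of_pos (by norm_num),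
      one_div (9 : ℝ), ENNReal.ofReal_inv_of_pos (by norm_num), one_div, one_div, ENNReal.inv_pow]
    norm_num

end
end
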